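/- With all heat operators taken with index m = 3, the weak Jacobi form φ_{0,3} = (ϑ(τ,2z)/ϑ(τ,z))² satisfies the non-homogeneous third-order identity H^{(3)}_{4}(H^{(3)}_{2}(H^{(3)}_{0}(φ_{0,3})))(τ,z) − (33/4)·E₄(τ)·H^{(3)}_{0}(φ_{0,3})(τ,z) + (3/2)·E₆(τ)·φ_{0,3}(τ,z) = 60·Δ(τ)·φ_{−2,1}(τ,z)³ at every point (τ,z) ∈ ℍ × ℂ with ϑ(τ,z) ≠ 0; in particular φ_{0,3} does not satisfy a modular differential equation of degree 3 with respect to the heat operator. -/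

import Mathlib

/-!
Write `D = (2πi)⁻¹ d/dz`, with primes denoting `D`-derivatives. The theta series satisfies the heat
equation (`hasDerivAt_thetaD_tau`) and the addition theorem (`theta_addition`)
`ϑ'(0)² ϑ(x+y) ϑ(x-y) = W(x) ϑ(y)² - ϑ(x)² W(y)` with `W = ϑ ϑ'' - ϑ'²`, which holds because the
products `ϑ(x+y) ϑ(x-y)` are combinations of two theta functions of index one. Differentiating it
in `y` gives the duplication formula for `ϑ(2z)` and, at `y = 0`, differential equations for `ϑ`
whose coefficients are Taylor coefficients of `ϑ` at `z = 0`. The Jacobi triple product expresses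
those coefficients by `η`, `E₂`, `E₄`, `E₆` (`theta_taylor`).

In terms of the normalised Weierstrass function `℘ = E₂/12 - (log ϑ)''` this says
`℘'² = 4℘³ - E₄℘/12 + E₆/216` and `ϑ(2z) = -ϑ⁴ ℘'/η⁹`, so that
`φ_{0,3} = φ_{-2,1}³ (4℘³ - E₄℘/12 + E₆/216)` (`phi03_eq`). Together with the heat equation the same
relations imply Ramanujan's formulas for the derivatives of `E₂`, `E₄`, `E₆`, and they show that the
modular heat operator of index `3` maps `φ_{-2,1}³ f(℘)` to `φ_{-2,1}³ g(℘)` for an explicit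
polynomial `g` (`heatMod_cubic`). Applied in weights `0` and `2` to the cubic above it produces
`f₁ = -E₄℘²/2 + E₆℘/12 - E₄²/288` and `f₂ = E₄℘³ + E₆℘² - (3/16)E₄²℘ + (7/864)E₄E₆`. After the third
application the combination in the theorem is free of `℘` and equals `(60/1728)(E₄³ - E₆²) = 60 Δ`
times `φ_{-2,1}³`; the last equality is `delta_eq`.
-/

open Complex Real

noncomputable section

/-- The Jacobi theta series `ϑ(τ,z) = q^{1/8} ζ^{1/2} ∑_{n∈ℤ} (−1)^n q^{n(n+1)/2} ζ^n`
with `q = e^{2πiτ}`, `ζ = e^{2πiz}`. -/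
def thetaJ (τ z : ℂ) : ℂ :=
  Complex.exp (π * I * τ / 4) * Complex.exp (π * I * z) *
    ∑' n : ℤ, (-1 : ℂ) ^ n * Complex.exp (π * I * τ * n * (n + 1)) *
      Complex.exp (2 * π * I * z * n)

/-- The Dedekind eta function `η(τ) = q^{1/24} ∏_{n≥1} (1 − q^n)`. -/
def etaD (τ : ℂ) : ℂ :=
  Complex.exp (π * I * τ / 12) * ∏' n : ℕ, (1 - Complex.exp (2 * π * I * τ * (n + 1)))

/-- The divisor power sum `σ_k(n) = ∑_{d ∣ n} d^k`. -/
def sigmaD (k n : ℕ) : ℕ := ∑ d ∈ n.divisors, d ^ k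

/-- The quasi-modular Eisenstein series `E₂`. -/
def Eis2 (τ : ℂ) : ℂ :=
  1 - 24 * ∑' n : ℕ, (sigmaD 1 (n + 1) : ℂ) * Complex.exp (2 * π * I * τ * (n + 1))

/-- The Eisenstein series `E₄`. -/
def Eis4 (τ : ℂ) : ℂ :=
  1 + 240 * ∑' n : ℕ, (sigmaD 3 (n + 1) : ℂ) * Complex.exp (2 * π * I * τ * (n + 1))

/-- The Eisenstein series `E₆`. -/
def Eis6 (τ : ℂ) : ℂ :=
  1 - 504 * ∑' n : ℕ, (sigmaD 5 (n + 1) : ℂ) * Complex.exp (2 * π * I * τ * (n + 1))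

/-- The heat operator `H^{(m)}φ = (12/(2πi)) ∂φ/∂τ + (3/(4π²m)) ∂²φ/∂z²` of index `m`. -/
def heatOp (m : ℚ) (φ : ℂ → ℂ → ℂ) (τ z : ℂ) : ℂ :=
  12 / (2 * π * I) * deriv (fun t => φ t z) τ
    + 3 / (4 * π ^ 2 * (m : ℂ)) * deriv (deriv (φ τ)) z

/-- The modular heat operator `H^{(m)}_k φ = H^{(m)}φ − ((2k−1)/2)·E₂·φ`. -/
def heatMod (m k : ℚ) (φ : ℂ → ℂ → ℂ) (τ z : ℂ) : ℂ :=
  heatOp m φ τ z - (2 * (k : ℂ) - 1) / 2 * Eis2 τ * φ τ z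

/-- The weak Jacobi form `φ_{−2,1} = ϑ²/η⁶` of weight −2 and index 1. -/
def phim21 (τ z : ℂ) : ℂ := thetaJ τ z ^ 2 / etaD τ ^ 6

/-- The weak Jacobi form `φ_{0,3}(τ,z) = (ϑ(τ,2z)/ϑ(τ,z))²` of weight 0 and index 3. -/
def phi03 (τ z : ℂ) : ℂ := (thetaJ τ (2 * z) / thetaJ τ z) ^ 2

/-- The Ramanujan cusp form `Δ(τ) = η(τ)²⁴`. -/
def DeltaR (τ : ℂ) : ℂ := etaD τ ^ 24

/-! ### Derivatives of the theta series and the heat equation -/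

/-- The `n`-th term of the series `thetaD k`. -/
def thetaTerm (k : ℕ) (τ z : ℂ) (n : ℤ) : ℂ :=
  ((n : ℂ) + 1 / 2) ^ k * ((-1 : ℂ) ^ n *
    Complex.exp (π * I * τ * ((n : ℂ) + 1 / 2) ^ 2 + 2 * π * I * z * ((n : ℂ) + 1 / 2)))

/-- The `k`-th derivative of `thetaJ` in `z` with respect to `(2πi)⁻¹ d/dz = ζ d/dζ`, written
as a series. -/
def thetaD (k : ℕ) (τ z : ℂ) : ℂ := ∑' n : ℤ, thetaTerm k τ z n

lemma thetaJ_eq_thetaD (τ z : ℂ) : thetaJ τ z = thetaD 0 τ z := by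
  unfold thetaJ thetaD thetaTerm
  rw [← tsum_mul_left]
  refine tsum_congr fun n => ?_
  rw [pow_zero, one_mul, mul_mul_mul_comm, mul_comm (Complex.exp (π * I * τ / 4)),
    mul_assoc, mul_assoc, mul_assoc]
  congr 1
  simp only [← Complex.exp_add]
  congr 1
  ring

lemma norm_thetaTerm_le {S T : ℝ} (hT : 0 < T) {z τ : ℂ} (hz : |z.im| ≤ S) (hτ : T ≤ τ.im)
    (k : ℕ) (n : ℤ) :
    ‖thetaTerm k τ z n‖ ≤ 2 ^ k * rexp (π * S) * ((|(n : ℝ)| ^ k + |(n : ℝ)| ^ 0) *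
      rexp (-π * (T * n ^ 2 - 2 * (S + T / 2) * |(n : ℝ)|))) := by
  have hS : 0 ≤ S := (abs_nonneg _).trans hz
  have e1 : ‖((n : ℂ) + 1 / 2)‖ = |(n : ℝ) + 1 / 2| := by
    have : ((n : ℂ) + 1 / 2) = (((n : ℝ) + 1 / 2 : ℝ) : ℂ) := by push_cast; ring
    rw [this, Complex.norm_real, Real.norm_eq_abs]
  have e2 : ‖((-1 : ℂ) ^ n)‖ = 1 := by simp
  have e3 : (π * I * τ * ((n : ℂ) + 1 / 2) ^ 2 + 2 * π * I * z * ((n : ℂ) + 1 / 2)).re =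
      -π * (τ.im * ((n : ℝ) + 1 / 2) ^ 2 + 2 * z.im * ((n : ℝ) + 1 / 2)) := by
    have : (π * I * τ * ((n : ℂ) + 1 / 2) ^ 2 + 2 * π * I * z * ((n : ℂ) + 1 / 2)) =
      ((π * ((n : ℝ) + 1 / 2) ^ 2 : ℝ) : ℂ) * (τ * I) + ((2 * π * ((n : ℝ) + 1 / 2) : ℝ) : ℂ) * (z * I) := by
      push_cast; ring
    rw [this, add_re, re_ofReal_mul, re_ofReal_mul, mul_I_re, mul_I_re]
    ring
  rw [thetaTerm, norm_mul, norm_mul, e2, one_mul, norm_pow, e1, Complex.norm_exp, e3]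
  have h1 : |(n : ℝ) + 1 / 2| ^ k ≤ 2 ^ k * (|(n : ℝ)| ^ k + |(n : ℝ)| ^ 0) := by
    rcases eq_or_ne n 0 with rfl | hn
    · have : |((0 : ℤ) : ℝ) + 1 / 2| ^ k ≤ 1 := by
        apply pow_le_one₀ (abs_nonneg _); norm_num
      have h2 : (1 : ℝ) ≤ 2 ^ k := one_le_pow₀ (by norm_num)
      have h3 : (0 : ℝ) ≤ |((0 : ℤ) : ℝ)| ^ k := by positivity
      rw [pow_zero]
      exact this.trans (one_le_mul_of_one_le_of_one_le h2 (by linarith))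
    · have h1 : (1 : ℝ) ≤ |(n : ℝ)| := by exact_mod_cast Int.one_le_abs hn
      have : |(n : ℝ) + 1 / 2| ≤ 2 * |(n : ℝ)| := by
        refine (abs_add_le _ _).trans ?_
        rw [abs_of_pos (by norm_num : (0 : ℝ) < 1 / 2)]; linarith
      calc _ ≤ (2 * |(n : ℝ)|) ^ k := by gcongr
        _ = 2 ^ k * |(n : ℝ)| ^ k := mul_pow _ _ _
        _ ≤ _ := by gcongr; simp
  have h2 : rexp (-π * (τ.im * ((n : ℝ) + 1 / 2) ^ 2 + 2 * z.im * ((n : ℝ) + 1 / 2))) ≤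
      rexp (π * S) * rexp (-π * (T * n ^ 2 - 2 * (S + T / 2) * |(n : ℝ)|)) := by
    rw [← Real.exp_add, Real.exp_le_exp]
    have a1 : T * ((n : ℝ) ^ 2 - |(n : ℝ)|) ≤ τ.im * ((n : ℝ) + 1 / 2) ^ 2 := by
      have : (n : ℝ) ^ 2 - |(n : ℝ)| ≤ ((n : ℝ) + 1 / 2) ^ 2 := by
        have := neg_abs_le (n : ℝ); nlinarith
      calc _ ≤ T * ((n : ℝ) + 1 / 2) ^ 2 := by gcongr
        _ ≤ _ := by gcongr
    have a2 : -(S * (|(n : ℝ)| + 1 / 2)) ≤ z.im * ((n : ℝ) + 1 / 2) := by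
      refine le_trans (neg_le_neg ?_) (neg_abs_le _)
      rw [abs_mul]
      have : |(n : ℝ) + 1 / 2| ≤ |(n : ℝ)| + 1 / 2 := by
        refine (abs_add_le _ _).trans ?_
        rw [abs_of_pos (by norm_num : (0 : ℝ) < 1 / 2)]
      gcongr
    have := Real.pi_pos
    nlinarith
  calc _ ≤ (2 ^ k * (|(n : ℝ)| ^ k + |(n : ℝ)| ^ 0)) *
      (rexp (π * S) * rexp (-π * (T * n ^ 2 - 2 * (S + T / 2) * |(n : ℝ)|))) := by gcongr
    _ = _ := by ring

lemma summable_thetaTerm_bound (S : ℝ) {T : ℝ} (hT : 0 < T) (k : ℕ) :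
    Summable fun n : ℤ => 2 ^ k * rexp (π * S) * ((|(n : ℝ)| ^ k + |(n : ℝ)| ^ 0) *
      rexp (-π * (T * n ^ 2 - 2 * (S + T / 2) * |(n : ℝ)|))) := by
  refine Summable.mul_left _ ?_
  simp_rw [add_mul]
  simpa using! (summable_pow_mul_jacobiTheta₂_term_bound (S + T / 2) hT k).add
    (summable_pow_mul_jacobiTheta₂_term_bound (S + T / 2) hT 0)

lemma summable_norm_thetaTerm (k : ℕ) {τ : ℂ} (hτ : 0 < τ.im) (z : ℂ) :
    Summable fun n => ‖thetaTerm k τ z n‖ :=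
  Summable.of_nonneg_of_le (fun _ => norm_nonneg _)
    (fun n => norm_thetaTerm_le hτ le_rfl le_rfl k n) (summable_thetaTerm_bound _ hτ k)

lemma summable_thetaTerm (k : ℕ) {τ : ℂ} (hτ : 0 < τ.im) (z : ℂ) :
    Summable (thetaTerm k τ z) := (summable_norm_thetaTerm k hτ z).of_norm

lemma hasDerivAt_thetaD_z (k : ℕ) {τ : ℂ} (hτ : 0 < τ.im) (z : ℂ) :
    HasDerivAt (fun w => thetaD k τ w) (2 * π * I * thetaD (k + 1) τ z) z := by
  have key := hasDerivAt_tsum_of_isPreconnected (g := fun n w => thetaTerm k τ w n)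
    (g' := fun n w => 2 * π * I * thetaTerm (k + 1) τ w n) (t := Metric.ball z 1) (y₀ := z) (y := z)
    ((summable_thetaTerm_bound (|z.im| + 1) hτ (k + 1)).mul_left ‖2 * π * I‖)
    Metric.isOpen_ball (convex_ball z 1).isPreconnected ?_ ?_ (Metric.mem_ball_self one_pos)
    (summable_thetaTerm k hτ z) (Metric.mem_ball_self one_pos)
  · simpa only [thetaD, tsum_mul_left] using key
  · intro n w _
    have h := ((((hasDerivAt_id w).const_mul (2 * π * I)).mul_const ((n : ℂ) + 1 / 2)).const_add
      (π * I * τ * ((n : ℂ) + 1 / 2) ^ 2)).cexp.const_mul (((n : ℂ) + 1 / 2) ^ k * (-1) ^ n)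
    convert! h using 1
    · funext w; simp only [thetaTerm, id]; ring
    · simp only [thetaTerm, id]; ring
  · intro n w hw
    rw [norm_mul]
    refine mul_le_mul_of_nonneg_left (norm_thetaTerm_le hτ ?_ le_rfl _ _) (norm_nonneg _)
    have h1 : |(w - z).im| ≤ ‖w - z‖ := Complex.abs_im_le_norm _
    rw [Metric.mem_ball, dist_eq_norm] at hw
    have h2 : |w.im| ≤ |z.im| + |(w - z).im| := by
      have : w.im = z.im + (w - z).im := by simp
      rw [this]; simpa using abs_add_le z.im (w - z).im
    linarith

/-- The heat equation, for all `z`-derivatives of the theta series. -/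
lemma hasDerivAt_thetaD_tau (k : ℕ) {τ : ℂ} (hτ : 0 < τ.im) (z : ℂ) :
    HasDerivAt (fun t => thetaD k t z) (π * I * thetaD (k + 2) τ z) τ := by
  have hT : 0 < τ.im / 2 := by positivity
  have key := hasDerivAt_tsum_of_isPreconnected (g := fun n w => thetaTerm k w z n)
    (g' := fun n w => π * I * thetaTerm (k + 2) w z n) (t := Metric.ball τ (τ.im / 2))
    (y₀ := τ) (y := τ)
    ((summable_thetaTerm_bound (|z.im|) hT (k + 2)).mul_left ‖π * I‖)
    Metric.isOpen_ball (convex_ball τ _).isPreconnected ?_ ?_ (Metric.mem_ball_self hT)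
    (summable_thetaTerm k hτ z) (Metric.mem_ball_self hT)
  · simpa only [thetaD, tsum_mul_left] using key
  · intro n w _
    have h := ((((hasDerivAt_id w).const_mul (π * I)).mul_const (((n : ℂ) + 1 / 2) ^ 2)).add_const
      (2 * π * I * z * ((n : ℂ) + 1 / 2))).cexp.const_mul (((n : ℂ) + 1 / 2) ^ k * (-1) ^ n)
    convert! h using 1
    · funext w; simp only [thetaTerm, id]; ring
    · simp only [thetaTerm, id]; ring
  · intro n w hw
    rw [norm_mul]
    refine mul_le_mul_of_nonneg_left (norm_thetaTerm_le hT le_rfl ?_ _ _) (norm_nonneg _)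
    have h1 : |(w - τ).im| ≤ ‖w - τ‖ := Complex.abs_im_le_norm _
    rw [Metric.mem_ball, dist_eq_norm] at hw
    have h2 := neg_abs_le (w - τ).im
    have : w.im = τ.im + (w - τ).im := by simp
    linarith

lemma thetaD_neg (k : ℕ) (τ z : ℂ) : thetaD k τ (-z) = (-1) ^ (k + 1) * thetaD k τ z := by
  unfold thetaD
  rw [← tsum_mul_left, ← (Equiv.subLeft (-1 : ℤ)).tsum_eq]
  refine tsum_congr fun n => ?_
  simp only [thetaTerm, Equiv.subLeft_apply]
  have e1 : (((-1 - n : ℤ) : ℂ) + 1 / 2) = -((n : ℂ) + 1 / 2) := by push_cast; ring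
  have e2 : ((-1 : ℂ) ^ (-1 - n)) = -(-1) ^ n := by
    rcases Int.even_or_odd n with h | h
    · rw [h.neg_one_zpow, (odd_neg_one.sub_even h).neg_one_zpow]
    · rw [h.neg_one_zpow, (odd_neg_one.sub_odd h).neg_one_zpow, neg_neg]
  rw [e1, e2, neg_pow, pow_succ]
  ring_nf

lemma thetaD_even_zero {k : ℕ} (hk : Even k) (τ : ℂ) : thetaD k τ 0 = 0 := by
  have h := thetaD_neg k τ 0
  rw [neg_zero, hk.add_one.neg_one_pow] at h
  have : (2 : ℂ) * thetaD k τ 0 = 0 := by linear_combination h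
  simpa using this

/-! ### The addition theorem and its consequences -/

/-- `f 0, f 1, f 2, …` are the successive derivatives on `S` of `f 0` with respect to
`(2πi)⁻¹ d/dz`. -/
def DerivChain (S : Set ℂ) (f : ℕ → ℂ → ℂ) : Prop :=
  ∀ k, ∀ y ∈ S, HasDerivAt (f k) (2 * π * I * f (k + 1) y) y

/-- The Leibniz expression for the `n`-th derivative of a product. -/
def leibniz (f g : ℕ → ℂ → ℂ) (n : ℕ) (y : ℂ) : ℂ :=
  ∑ p ∈ Finset.HasAntidiagonal.antidiagonal n, (n.choose p.1 : ℂ) * (f p.1 y * g p.2 y)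

namespace DerivChain

variable {S : Set ℂ} {f g : ℕ → ℂ → ℂ}

lemma leibniz (hf : DerivChain S f) (hg : DerivChain S g) : DerivChain S (leibniz f g) := by
  intro n y hy
  have h : HasDerivAt (_root_.leibniz f g n) (∑ p ∈ Finset.HasAntidiagonal.antidiagonal n, (n.choose p.1 : ℂ) *
      ((2 * π * I * f (p.1 + 1) y) * g p.2 y + f p.1 y * (2 * π * I * g (p.2 + 1) y))) y := by
    have := HasDerivAt.sum (u := Finset.HasAntidiagonal.antidiagonal n) (x := y)
      (A := fun p y => (n.choose p.1 : ℂ) * (f p.1 y * g p.2 y))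
      (fun p _ => ((hf p.1 y hy).mul (hg p.2 y hy)).const_mul (n.choose p.1 : ℂ))
    convert! this using 1
    funext w; simp [_root_.leibniz]
  convert! h using 1
  rw [_root_.leibniz, Finset.sum_antidiagonal_choose_succ_mul (fun i j => f i y * g j y),
    mul_add, Finset.mul_sum, Finset.mul_sum, ← Finset.sum_add_distrib]
  refine Finset.sum_congr rfl fun p hp => ?_
  rw [Finset.HasAntidiagonal.mem_antidiagonal] at hp
  rw [show n.choose p.2 = n.choose p.1 from Nat.choose_symm_of_eq_add (by omega)]
  ring

lemma sub (hf : DerivChain S f) (hg : DerivChain S g) :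
    DerivChain S (fun k y => f k y - g k y) := fun k y hy => by
  convert! (hf k y hy).sub (hg k y hy) using 1; ring

lemma const_mul (c : ℂ) (hf : DerivChain S f) : DerivChain S (fun k y => c * f k y) :=
  fun k y hy => by convert! (hf k y hy).const_mul c using 1; ring

lemma shift (m : ℕ) (hf : DerivChain S f) : DerivChain S (fun k => f (k + m)) :=
  fun k y hy => by
    have := hf (k + m) y hy
    rwa [show k + m + 1 = k + 1 + m by ring] at this

lemma eqOn (hS : IsOpen S) (hf : DerivChain S f) (hg : DerivChain S g)
    (h : Set.EqOn (f 0) (g 0) S) (n : ℕ) : Set.EqOn (f n) (g n) S := by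
  induction n with
  | zero => exact h
  | succ n ih =>
    intro y hy
    have h1 := (hf n y hy).congr_of_eventuallyEq
      (Filter.eventuallyEq_of_mem (hS.mem_nhds hy) ih.symm)
    have h2 := h1.unique (hg n y hy)
    exact mul_left_cancel₀ two_pi_I_ne_zero h2

lemma of_differentiableOn {F : ℂ → ℂ} (hS : IsOpen S) (hF : DifferentiableOn ℂ F S) :
    DerivChain S (fun k y => (2 * π * I)⁻¹ ^ k * iteratedDeriv k F y) := by
  intro k y hy
  have hA : AnalyticAt ℂ F y := hF.analyticAt (hS.mem_nhds hy)
  have h1 : DifferentiableAt ℂ (iteratedDeriv k F) y := by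
    rw [iteratedDeriv_eq_iterate]
    exact (hA.iterated_deriv k).differentiableAt
  have h2 := h1.hasDerivAt.const_mul ((2 * π * I)⁻¹ ^ k)
  convert! h2 using 1
  beta_reduce
  rw [iteratedDeriv_succ, pow_succ]
  field_simp [two_pi_I_ne_zero]

end DerivChain

lemma chain_theta {τ : ℂ} (hτ : 0 < τ.im) (S : Set ℂ) : DerivChain S (fun k => thetaD k τ) :=
  fun k y _ => hasDerivAt_thetaD_z k hτ y

lemma chain_theta_add {τ : ℂ} (hτ : 0 < τ.im) (x : ℂ) (S : Set ℂ) :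
    DerivChain S (fun k y => thetaD k τ (x + y)) :=
  fun k y _ => (hasDerivAt_thetaD_z k hτ (x + y)).comp_const_add x y

lemma chain_theta_sub {τ : ℂ} (hτ : 0 < τ.im) (x : ℂ) (S : Set ℂ) :
    DerivChain S (fun k y => (-1) ^ k * thetaD k τ (x - y)) := fun k y _ => by
  convert! ((hasDerivAt_thetaD_z k hτ (x - y)).comp_const_sub x y).const_mul ((-1) ^ k) using 1
  beta_reduce
  rw [pow_succ]; ring

/-- The theta function `∑_{r odd} q^{r²/4} ζ^r` of index one. -/
def thetaOdd (τ x : ℂ) : ℂ :=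
  ∑' n : ℤ, Complex.exp (π * I * τ * (2 * n + 1) ^ 2 / 2 + 2 * π * I * x * (2 * n + 1))

/-- The theta function `∑_{r even} q^{r²/4} ζ^r` of index one. -/
def thetaEven (τ x : ℂ) : ℂ :=
  ∑' n : ℤ, Complex.exp (π * I * τ * (2 * n) ^ 2 / 2 + 2 * π * I * x * (2 * n))

lemma thetaEven_term (τ x : ℂ) (n : ℤ) :
    Complex.exp (π * I * τ * (2 * n) ^ 2 / 2 + 2 * π * I * x * (2 * n)) =
      jacobiTheta₂_term n (2 * x) (2 * τ) := by
  rw [jacobiTheta₂_term]; congr 1; ring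

lemma thetaOdd_term (τ x : ℂ) (n : ℤ) :
    Complex.exp (π * I * τ * (2 * n + 1) ^ 2 / 2 + 2 * π * I * x * (2 * n + 1)) =
      Complex.exp (π * I * τ / 2 + 2 * π * I * x) * jacobiTheta₂_term n (2 * x + τ) (2 * τ) := by
  rw [jacobiTheta₂_term, ← Complex.exp_add]; congr 1; ring

lemma two_mul_im_pos {τ : ℂ} (hτ : 0 < τ.im) : 0 < (2 * τ).im := by simpa using hτ

lemma differentiable_thetaEven {τ : ℂ} (hτ : 0 < τ.im) : Differentiable ℂ (thetaEven τ) := by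
  have : thetaEven τ = fun x => jacobiTheta₂ (2 * x) (2 * τ) := by
    funext x; simp only [thetaEven, thetaEven_term]; rfl
  rw [this]
  intro x
  exact (differentiableAt_jacobiTheta₂_fst (2 * x) (two_mul_im_pos hτ)).comp x (by fun_prop)

lemma differentiable_thetaOdd {τ : ℂ} (hτ : 0 < τ.im) : Differentiable ℂ (thetaOdd τ) := by
  have : thetaOdd τ = fun x => Complex.exp (π * I * τ / 2 + 2 * π * I * x) *
      jacobiTheta₂ (2 * x + τ) (2 * τ) := by
    funext x; simp only [thetaOdd, thetaOdd_term, tsum_mul_left]; rfl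
  rw [this]
  intro x
  refine DifferentiableAt.mul (by fun_prop) ?_
  exact (differentiableAt_jacobiTheta₂_fst (2 * x + τ) (two_mul_im_pos hτ)).comp x
    (f := fun x => 2 * x + τ) (by fun_prop)

/-- Pairs of integers, split according to the parity of their difference. -/
def parityMap : (ℤ × ℤ) ⊕ (ℤ × ℤ) → ℤ × ℤ
  | .inl (a, b) => (a + b, a - b)
  | .inr (a, b) => (a + b, a - b - 1)

lemma parityMap_bijective : Function.Bijective parityMap := by
  constructor
  · rintro (⟨a, b⟩ | ⟨a, b⟩) (⟨c, d⟩ | ⟨c, d⟩) h <;> simp only [parityMap, Prod.mk.injEq] at h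
    · congr 2 <;> omega
    · omega
    · omega
    · congr 2 <;> omega
  · rintro ⟨n, m⟩
    rcases Int.even_or_odd (n - m) with ⟨b, hb⟩ | ⟨b, hb⟩
    · exact ⟨.inl (n - b, b), by simp only [parityMap, Prod.mk.injEq]; omega⟩
    · exact ⟨.inr (n - b, b), by simp only [parityMap, Prod.mk.injEq]; omega⟩

lemma summable_norm_jacobi (z : ℂ) {τ : ℂ} (hτ : 0 < τ.im) :
    Summable fun n => ‖jacobiTheta₂_term n z τ‖ :=
  ((summable_jacobiTheta₂_term_iff z τ).2 hτ).norm

/-- The product of two theta series, rearranged along `r = n + m + 1`, `s = n - m`. -/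
lemma theta_mul_theta {τ : ℂ} (hτ : 0 < τ.im) (x y : ℂ) :
    thetaD 0 τ (x + y) * thetaD 0 τ (x - y) =
      thetaOdd τ x * thetaEven τ y - thetaEven τ x * thetaOdd τ y := by
  have hE : ∀ x, Summable fun n : ℤ =>
      ‖Complex.exp (π * I * τ * (2 * n) ^ 2 / 2 + 2 * π * I * x * (2 * n))‖ := fun x => by
    simp only [thetaEven_term]; exact summable_norm_jacobi _ (two_mul_im_pos hτ)
  have hO : ∀ x, Summable fun n : ℤ =>
      ‖Complex.exp (π * I * τ * (2 * n + 1) ^ 2 / 2 + 2 * π * I * x * (2 * n + 1))‖ := fun x => by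
    simp only [thetaOdd_term, norm_mul]
    exact (summable_norm_jacobi _ (two_mul_im_pos hτ)).mul_left _
  have h1 := summable_norm_thetaTerm 0 hτ (x + y)
  have h2 := summable_norm_thetaTerm 0 hτ (x - y)
  rw [thetaD, thetaD, tsum_mul_tsum_of_summable_norm h1 h2, thetaOdd, thetaEven, thetaOdd,
    thetaEven, tsum_mul_tsum_of_summable_norm (hO x) (hE y),
    tsum_mul_tsum_of_summable_norm (hE x) (hO y), sub_eq_add_neg (tsum _), ← tsum_neg,
    ← (Equiv.ofBijective _ parityMap_bijective).tsum_eq]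
  have hsum := (Equiv.ofBijective _ parityMap_bijective).summable_iff.2
    (summable_mul_of_summable_norm h1 h2)
  refine (Summable.tsum_sum (hsum.comp_injective Sum.inl_injective)
    (hsum.comp_injective Sum.inr_injective)).trans ?_
  congr 1
  · refine tsum_congr fun p => ?_
    obtain ⟨a, b⟩ := p
    simp only [Function.comp_apply, Equiv.ofBijective_apply, parityMap, thetaTerm, pow_zero,
      one_mul]
    have e : ((-1 : ℂ) ^ (a + b)) * (-1) ^ (a - b) = 1 := by
      rw [← zpow_add₀ (by norm_num), show a + b + (a - b) = 2 * a by ring]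
      exact (even_two_mul a).neg_one_zpow
    rw [mul_mul_mul_comm, e, one_mul, ← Complex.exp_add, ← Complex.exp_add]
    congr 1
    push_cast; ring
  · refine tsum_congr fun p => ?_
    obtain ⟨a, b⟩ := p
    simp only [Function.comp_apply, Equiv.ofBijective_apply, parityMap, thetaTerm, pow_zero,
      one_mul]
    have e : ((-1 : ℂ) ^ (a + b)) * (-1) ^ (a - b - 1) = -1 := by
      rw [← zpow_add₀ (by norm_num), show a + b + (a - b - 1) = 2 * a - 1 by ring]
      exact ((even_two_mul a).sub_odd odd_one).neg_one_zpow
    rw [mul_mul_mul_comm, e, neg_one_mul, ← Complex.exp_add, ← Complex.exp_add]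
    congr 2
    push_cast; ring

/-- `ϑ ϑ'' - ϑ'²`, that is `ϑ² (log ϑ)''`, together with its successive derivatives. -/
def wronD (τ : ℂ) (k : ℕ) (z : ℂ) : ℂ :=
  leibniz (fun j => thetaD j τ) (fun j => thetaD (j + 2) τ) k z -
    leibniz (fun j => thetaD (j + 1) τ) (fun j => thetaD (j + 1) τ) k z

lemma chain_wron {τ : ℂ} (hτ : 0 < τ.im) (S : Set ℂ) : DerivChain S (wronD τ) :=
  ((chain_theta hτ S).leibniz ((chain_theta hτ S).shift 2)).sub
    (((chain_theta hτ S).shift 1).leibniz ((chain_theta hτ S).shift 1))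

lemma wronD_zero (τ z : ℂ) :
    wronD τ 0 z = thetaD 0 τ z * thetaD 2 τ z - thetaD 1 τ z ^ 2 := by
  simp [wronD, leibniz, pow_two]

/-- The addition theorem for theta functions. -/
lemma theta_addition {τ : ℂ} (hτ : 0 < τ.im) (x y : ℂ) :
    thetaD 1 τ 0 ^ 2 * (thetaD 0 τ (x + y) * thetaD 0 τ (x - y)) =
      wronD τ 0 x * thetaD 0 τ y ^ 2 - thetaD 0 τ x ^ 2 * wronD τ 0 y := by
  obtain ⟨a, ha⟩ : ∃ a : ℕ → ℂ → ℂ, a = fun k y =>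
    (2 * π * I)⁻¹ ^ k * iteratedDeriv k (thetaOdd τ) y := ⟨_, rfl⟩
  obtain ⟨b, hb⟩ : ∃ b : ℕ → ℂ → ℂ, b = fun k y =>
    (2 * π * I)⁻¹ ^ k * iteratedDeriv k (thetaEven τ) y := ⟨_, rfl⟩
  have cA : DerivChain Set.univ a := by
    rw [ha]; exact .of_differentiableOn isOpen_univ (differentiable_thetaOdd hτ).differentiableOn
  have cB : DerivChain Set.univ b := by
    rw [hb]; exact .of_differentiableOn isOpen_univ (differentiable_thetaEven hτ).differentiableOn
  have hK : ∀ x y, thetaD 0 τ (x + y) * thetaD 0 τ (x - y) = a 0 x * b 0 y - b 0 x * a 0 y := by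
    intro x y; rw [theta_mul_theta hτ]; simp [ha, hb]
  have hsq : ∀ x, thetaD 0 τ x ^ 2 = a 0 x * b 0 0 - b 0 x * a 0 0 := by
    intro x; rw [← hK]; simp [pow_two]
  have hW : ∀ x, 2 * wronD τ 0 x = a 0 x * b 2 0 - b 0 x * a 2 0 := by
    intro x
    have := ((chain_theta_add hτ x Set.univ).leibniz (chain_theta_sub hτ x Set.univ)).eqOn
      isOpen_univ ((cB.const_mul (a 0 x)).sub (cA.const_mul (b 0 x)))
      (fun y _ => by simpa [leibniz] using hK x y) 2 (Set.mem_univ 0)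
    simp [leibniz, Finset.Nat.antidiagonal_succ] at this
    rw [← this, wronD_zero]
    ring
  have hdet : 2 * thetaD 1 τ 0 ^ 2 = a 2 0 * b 0 0 - b 2 0 * a 0 0 := by
    have := ((chain_theta hτ Set.univ).leibniz (chain_theta hτ Set.univ)).eqOn
      isOpen_univ ((cA.const_mul (b 0 0)).sub (cB.const_mul (a 0 0)))
      (fun y _ => by simp [leibniz, ← pow_two, hsq y]; ring) 2 (Set.mem_univ 0)
    simp [leibniz, Finset.Nat.antidiagonal_succ, thetaD_even_zero] at this
    linear_combination this
  rw [hK, hsq, hsq]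
  have hx := hW x
  have hy := hW y
  linear_combination (a 0 x * b 0 y - b 0 x * a 0 y) / 2 * hdet
    - (a 0 y * b 0 0 - b 0 y * a 0 0) / 2 * hx + (a 0 x * b 0 0 - b 0 x * a 0 0) / 2 * hy

/-- The duplication formula `ϑ'(0)³ ϑ(2z) = ϑ⁴ (log ϑ)'''`, with denominators cleared. -/
lemma theta_double {τ : ℂ} (hτ : 0 < τ.im) (x : ℂ) :
    thetaD 1 τ 0 ^ 3 * thetaD 0 τ (2 * x) = thetaD 0 τ x ^ 2 * wronD τ 1 x
      - 2 * thetaD 0 τ x * thetaD 1 τ x * wronD τ 0 x := by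
  have := (((chain_theta_add hτ x Set.univ).leibniz
    (chain_theta_sub hτ x Set.univ)).const_mul (thetaD 1 τ 0 ^ 2)).eqOn isOpen_univ
      ((((chain_theta hτ Set.univ).leibniz (chain_theta hτ Set.univ)).const_mul (wronD τ 0 x)).sub
        ((chain_wron hτ Set.univ).const_mul (thetaD 0 τ x ^ 2)))
      (fun y _ => by simpa [leibniz, ← pow_two] using theta_addition hτ x y) 1 (Set.mem_univ x)
  simp [leibniz, Finset.Nat.antidiagonal_succ, thetaD_even_zero, ← two_mul] at this
  linear_combination - this

/-- The fourth derivative in `y` of the addition theorem at `y = 0`. -/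
lemma theta_ode_four {τ : ℂ} (hτ : 0 < τ.im) (x : ℂ) :
    thetaD 1 τ 0 ^ 2 * (2 * thetaD 0 τ x * thetaD 4 τ x - 8 * thetaD 1 τ x * thetaD 3 τ x
        + 6 * thetaD 2 τ x ^ 2) =
      wronD τ 0 x * (8 * thetaD 1 τ 0 * thetaD 3 τ 0)
      - thetaD 0 τ x ^ 2 * (2 * thetaD 1 τ 0 * thetaD 5 τ 0 - 2 * thetaD 3 τ 0 ^ 2) := by
  have := (((chain_theta_add hτ x Set.univ).leibniz
    (chain_theta_sub hτ x Set.univ)).const_mul (thetaD 1 τ 0 ^ 2)).eqOn isOpen_univ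
      ((((chain_theta hτ Set.univ).leibniz (chain_theta hτ Set.univ)).const_mul (wronD τ 0 x)).sub
        ((chain_wron hτ Set.univ).const_mul (thetaD 0 τ x ^ 2)))
      (fun y _ => by simpa [leibniz, ← pow_two] using theta_addition hτ x y) 4 (Set.mem_univ 0)
  have h2 : thetaD 2 τ 0 = 0 := thetaD_even_zero (by decide) τ
  have h4 : thetaD 4 τ 0 = 0 := thetaD_even_zero (by decide) τ
  have h0 : thetaD 0 τ 0 = 0 := thetaD_even_zero (by decide) τ
  have w : wronD τ 4 0 = 2 * thetaD 1 τ 0 * thetaD 5 τ 0 - 2 * thetaD 3 τ 0 ^ 2 := by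
    simp [wronD, leibniz, Finset.Nat.antidiagonal_succ, Nat.choose, h0, h2, h4]; ring
  simp [leibniz, Finset.Nat.antidiagonal_succ, Nat.choose, h0, h2, h4, w] at this
  linear_combination this

/-- The sixth derivative in `y` of the addition theorem at `y = 0`. -/
lemma theta_ode_six {τ : ℂ} (hτ : 0 < τ.im) (x : ℂ) :
    thetaD 1 τ 0 ^ 2 * (2 * thetaD 0 τ x * thetaD 6 τ x - 12 * thetaD 1 τ x * thetaD 5 τ x
        + 30 * thetaD 2 τ x * thetaD 4 τ x - 20 * thetaD 3 τ x ^ 2) =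
      wronD τ 0 x * (12 * thetaD 1 τ 0 * thetaD 5 τ 0 + 20 * thetaD 3 τ 0 ^ 2)
      - thetaD 0 τ x ^ 2 * (4 * thetaD 1 τ 0 * thetaD 7 τ 0 - 4 * thetaD 3 τ 0 * thetaD 5 τ 0) := by
  have := (((chain_theta_add hτ x Set.univ).leibniz
    (chain_theta_sub hτ x Set.univ)).const_mul (thetaD 1 τ 0 ^ 2)).eqOn isOpen_univ
      ((((chain_theta hτ Set.univ).leibniz (chain_theta hτ Set.univ)).const_mul (wronD τ 0 x)).sub
        ((chain_wron hτ Set.univ).const_mul (thetaD 0 τ x ^ 2)))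
      (fun y _ => by simpa [leibniz, ← pow_two] using theta_addition hτ x y) 6 (Set.mem_univ 0)
  have h2 : thetaD 2 τ 0 = 0 := thetaD_even_zero (by decide) τ
  have h4 : thetaD 4 τ 0 = 0 := thetaD_even_zero (by decide) τ
  have h6 : thetaD 6 τ 0 = 0 := thetaD_even_zero (by decide) τ
  have h0 : thetaD 0 τ 0 = 0 := thetaD_even_zero (by decide) τ
  have w : wronD τ 6 0 = 4 * thetaD 1 τ 0 * thetaD 7 τ 0 - 4 * thetaD 3 τ 0 * thetaD 5 τ 0 := by
    simp [wronD, leibniz, Finset.Nat.antidiagonal_succ, Nat.choose, h0, h2, h4, h6]; ring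
  simp [leibniz, Finset.Nat.antidiagonal_succ, Nat.choose, h0, h2, h4, h6, w] at this
  linear_combination this

/-! ### The Jacobi triple product -/

/-- The reciprocal of the `q`-Pochhammer symbol `(q;q)_m = ∏_{k=1}^m (1 - q^k)`, extended by zero
to negative `m`. -/
def pochInv (q : ℂ) (m : ℤ) : ℂ :=
  if 0 ≤ m then (∏ k ∈ Finset.range m.toNat, (1 - q ^ (k + 1)))⁻¹ else 0

lemma one_sub_pow_ne_zero' {q : ℂ} (hq : ‖q‖ < 1) (k : ℕ) : 1 - q ^ (k + 1) ≠ 0 := by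
  intro h
  have h1 : ‖q ^ (k + 1)‖ = 1 := by rw [← sub_eq_zero.1 h]; simp
  rw [norm_pow] at h1
  exact absurd h1 (pow_lt_one₀ (norm_nonneg _) hq (by omega)).ne

lemma pochInv_sub_one {q : ℂ} (hq : ‖q‖ < 1) (m : ℤ) :
    pochInv q (m - 1) = (1 - q ^ m) * pochInv q m := by
  rcases lt_trichotomy m 0 with h | h | h
  · simp [pochInv, h.not_ge, show ¬ (1 ≤ m) by omega]
  · subst h; simp [pochInv]
  · obtain ⟨k, rfl⟩ : ∃ k : ℕ, m = k + 1 := ⟨(m - 1).toNat, by omega⟩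
    have e : ((k : ℤ) + 1).toNat = k + 1 := by omega
    have := one_sub_pow_ne_zero' hq k
    rw [pochInv, pochInv, if_pos (by omega), if_pos (by omega), e, Finset.prod_range_succ,
      add_sub_cancel_right, Int.toNat_natCast, mul_inv, mul_comm _ (1 - q ^ (k + 1))⁻¹,
      ← mul_assoc, show ((k : ℤ) + 1) = ((k + 1 : ℕ) : ℤ) by push_cast; rfl, zpow_natCast,
      mul_inv_cancel₀ this, one_mul]

/-- The central `q`-binomial coefficient `[2n, n + j]`. -/
def centralCoeff (q : ℂ) (n : ℕ) (j : ℤ) : ℂ :=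
  (∏ k ∈ Finset.range (2 * n), (1 - q ^ (k + 1))) * (pochInv q (n + j) * pochInv q (n - j))

lemma centralCoeff_succ {q : ℂ} (hq0 : q ≠ 0) (hq : ‖q‖ < 1) (n : ℕ) (j : ℤ) :
    centralCoeff q (n + 1) j = (1 + q ^ (2 * n + 1)) * centralCoeff q n j
      + q ^ (n + 1) * (q ^ j)⁻¹ * centralCoeff q n (j - 1)
      + q ^ (n + 1) * q ^ j * centralCoeff q n (j + 1) := by
  simp only [centralCoeff]
  rw [show 2 * (n + 1) = 2 * n + 1 + 1 by ring, Finset.prod_range_succ, Finset.prod_range_succ]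
  generalize ∏ k ∈ Finset.range (2 * n), (1 - q ^ (k + 1)) = R
  have a1 := pochInv_sub_one hq ((n : ℤ) + 1 + j)
  have a2 := pochInv_sub_one hq ((n : ℤ) + j)
  have b1 := pochInv_sub_one hq ((n : ℤ) + 1 - j)
  have b2 := pochInv_sub_one hq ((n : ℤ) - j)
  rw [show (n : ℤ) + 1 + j - 1 = n + j by ring] at a1
  rw [show (n : ℤ) + 1 - j - 1 = n - j by ring] at b1
  push_cast
  rw [show (n : ℤ) + (j - 1) = n + j - 1 by ring, show (n : ℤ) - (j - 1) = n + 1 - j by ring,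
    show (n : ℤ) + (j + 1) = n + 1 + j by ring, show (n : ℤ) - (j + 1) = n - j - 1 by ring,
    a2, b2, a1, b1]
  have hj : q ^ j ≠ 0 := zpow_ne_zero _ hq0
  simp only [zpow_sub₀ hq0, zpow_add₀ hq0, zpow_natCast, zpow_one]
  rw [show 2 * n + 1 + 1 = n + n + 1 + 1 by ring, show 2 * n + 1 = n + n + 1 by ring]
  simp only [pow_succ, pow_add]
  field_simp
  ring

/-- The sequence `u j = (-1)^j q^{j(j+1)/2} ζ^j`, described by its recurrence in order to avoid the
half-integral exponents, and required to be absolutely summable. -/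
structure ThetaSeq (q ζ : ℂ) (u : ℤ → ℂ) : Prop where
  zero : u 0 = 1
  succ : ∀ j, u (j + 1) = -(q ^ (j + 1) * ζ) * u j
  summable : Summable fun j => ‖u j‖

lemma centralCoeff_support (q : ℂ) (n : ℕ) {j : ℤ} (hj : j ∉ Finset.Icc (-(n : ℤ)) n) :
    centralCoeff q n j = 0 := by
  have : (n : ℤ) + j < 0 ∨ (n : ℤ) - j < 0 := by
    simp only [Finset.mem_Icc, not_and_or, not_le] at hj; omega
  rcases this with h | h <;> rw [centralCoeff, pochInv, pochInv]
  · rw [if_neg h.not_ge, zero_mul, mul_zero]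
  · rw [if_neg h.not_ge, mul_zero, mul_zero]

/-- The finite form of the Jacobi triple product. -/
lemma finite_triple {q ζ : ℂ} (hq0 : q ≠ 0) (hq : ‖q‖ < 1) (hζ : ζ ≠ 0) {u : ℤ → ℂ}
    (hu : ThetaSeq q ζ u) (n : ℕ) :
    ∑' j, u j * centralCoeff q n j =
      ∏ k ∈ Finset.range n, ((1 - q ^ (k + 1) * ζ) * (1 - q ^ k * ζ⁻¹)) := by
  have hs : ∀ n, Summable fun j => u j * centralCoeff q n j := fun n =>
    summable_of_ne_finset_zero (s := Finset.Icc (-(n : ℤ)) n) fun j hj => by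
      rw [centralCoeff_support q n hj, mul_zero]
  induction n with
  | zero =>
    rw [tsum_eq_single 0]
    · simp [hu.zero, centralCoeff, pochInv]
    · intro j hj
      rw [centralCoeff_support, mul_zero]; simpa using hj
  | succ n ih =>
    have hs1 : Summable fun j => u (j - 1) * centralCoeff q n (j - 1) :=
      (hs n).comp_injective (i := fun j : ℤ => j - 1) sub_left_injective
    have hs2 : Summable fun j => u (j + 1) * centralCoeff q n (j + 1) :=
      (hs n).comp_injective (i := fun j : ℤ => j + 1) (add_left_injective 1)
    have e1 : ∑' j, u (j - 1) * centralCoeff q n (j - 1) = ∑' j, u j * centralCoeff q n j :=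
      (Equiv.subRight (1 : ℤ)).tsum_eq fun j => u j * centralCoeff q n j
    have e2 : ∑' j, u (j + 1) * centralCoeff q n (j + 1) = ∑' j, u j * centralCoeff q n j :=
      (Equiv.addRight (1 : ℤ)).tsum_eq fun j => u j * centralCoeff q n j
    rw [Finset.prod_range_succ, ← ih]
    have key : ∀ j, u j * centralCoeff q (n + 1) j =
        (1 + q ^ (2 * n + 1)) * (u j * centralCoeff q n j)
        + (-(q ^ (n + 1) * ζ)) * (u (j - 1) * centralCoeff q n (j - 1))
        + (-(q ^ n * ζ⁻¹)) * (u (j + 1) * centralCoeff q n (j + 1)) := by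
      intro j
      have h1 := hu.succ (j - 1)
      rw [sub_add_cancel] at h1
      have hj : q ^ j ≠ 0 := zpow_ne_zero _ hq0
      rw [centralCoeff_succ hq0 hq, hu.succ j, h1, zpow_add₀ hq0, zpow_one]
      field_simp
      ring
    simp only [key]
    rw [Summable.tsum_add (((hs n).mul_left _).add (hs1.mul_left _)) (hs2.mul_left _),
      Summable.tsum_add ((hs n).mul_left _) (hs1.mul_left _), tsum_mul_left, tsum_mul_left,
      tsum_mul_left, e1, e2]
    field_simp
    ring

/-- The general term of the double series `-∑_{n,d ≥ 1} d^{k-1} x^d q^{nd}`, with `p = (n-1, d-1)`.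
For `k = 0` the sum is `∑_{n ≥ 1} log (1 - q^n x)`. -/
def lambertTerm (k : ℕ) (q x : ℂ) (p : ℕ × ℕ) : ℂ :=
  -((p.2 + 1 : ℂ) ^ k / (p.2 + 1) * (q ^ (p.1 + 1) * x) ^ (p.2 + 1))

lemma norm_lambertTerm_le (k : ℕ) {q x : ℂ} (hq : ‖q‖ < 1) {r : ℝ} (hx : ‖q * x‖ ≤ r)
    (p : ℕ × ℕ) :
    ‖lambertTerm k q x p‖ ≤ ‖q‖ ^ p.1 * ((p.2 + 1 : ℝ) ^ k * r ^ (p.2 + 1)) := by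
  have e : ‖(p.2 + 1 : ℂ)‖ = (p.2 + 1 : ℝ) := by
    rw [← Nat.cast_succ, Complex.norm_natCast]; push_cast; rfl
  have h1 : ‖q ^ (p.1 + 1) * x‖ = ‖q‖ ^ p.1 * ‖q * x‖ := by
    rw [pow_succ, norm_mul, norm_mul, norm_mul, norm_pow]; ring
  rw [lambertTerm, norm_neg, norm_mul, norm_div, norm_pow, norm_pow, e, h1, mul_pow]
  have h2 : (p.2 + 1 : ℝ) ^ k / (p.2 + 1) ≤ (p.2 + 1 : ℝ) ^ k :=
    div_le_self (by positivity) (by linarith [Nat.cast_nonneg (α := ℝ) p.2])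
  have h3 : (‖q‖ ^ p.1) ^ (p.2 + 1) ≤ ‖q‖ ^ p.1 :=
    pow_le_of_le_one (by positivity) (pow_le_one₀ (norm_nonneg _) hq.le) (by omega)
  have h4 : ‖q * x‖ ^ (p.2 + 1) ≤ r ^ (p.2 + 1) := by gcongr
  calc _ ≤ (p.2 + 1 : ℝ) ^ k * (‖q‖ ^ p.1 * r ^ (p.2 + 1)) := by gcongr
    _ = _ := by ring

lemma summable_lambert_bound (k : ℕ) {q : ℂ} (hq : ‖q‖ < 1) {r : ℝ} (h0 : 0 ≤ r) (h1 : r < 1) :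
    Summable fun p : ℕ × ℕ => ‖q‖ ^ p.1 * ((p.2 + 1 : ℝ) ^ k * r ^ (p.2 + 1)) := by
  have hb : Summable fun d : ℕ => ((d + 1 : ℝ) ^ k * r ^ (d + 1)) := by
    have := (summable_nat_add_iff 1).2 (summable_pow_mul_geometric_of_norm_lt_one k
      (r := r) (by rwa [Real.norm_of_nonneg h0]))
    simpa only [Nat.cast_add, Nat.cast_one] using this
  exact (summable_geometric_of_lt_one (norm_nonneg q) hq).mul_of_nonneg hb
    (fun _ => pow_nonneg (norm_nonneg _) _) (fun _ => by positivity)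

lemma summable_lambertTerm (k : ℕ) {q x : ℂ} (hq : ‖q‖ < 1) (hx : ‖q * x‖ < 1) :
    Summable (lambertTerm k q x) :=
  .of_norm_bounded (summable_lambert_bound k hq (norm_nonneg _) hx)
    (norm_lambertTerm_le k hq le_rfl)

lemma tendsto_prod_one_sub {q x : ℂ} (hq : ‖q‖ < 1) (hx : ‖q * x‖ < 1) :
    Filter.Tendsto (fun n => ∏ k ∈ Finset.range n, (1 - q ^ (k + 1) * x)) Filter.atTop
      (nhds (Complex.exp (∑' p, lambertTerm 0 q x p))) := by
  have hlt : ∀ k, ‖q ^ (k + 1) * x‖ < 1 := fun k => by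
    rw [pow_succ, mul_assoc, norm_mul, norm_pow]
    exact (mul_le_of_le_one_left (norm_nonneg _) (pow_le_one₀ (norm_nonneg _) hq.le)).trans_lt hx
  have hlog : ∀ n, HasSum (fun d => lambertTerm 0 q x (n, d))
      (Complex.log (1 - q ^ (n + 1) * x)) := fun n => by
    have := (Complex.hasSum_taylorSeries_neg_log (hlt n))
    rw [← hasSum_nat_add_iff' 1] at this
    have := this.neg
    simp only [Finset.range_one, Finset.sum_singleton, Nat.cast_zero, div_zero, sub_zero,
      neg_neg] at this
    convert! this using 2 with d
    simp [lambertTerm]; ring_nf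
  have hs := (summable_lambertTerm 0 hq hx).hasSum.prod_fiberwise hlog
  have := (Complex.continuous_exp.tendsto _).comp hs.tendsto_sum_nat
  refine this.congr fun n => ?_
  rw [Function.comp_apply, Complex.exp_sum]
  refine Finset.prod_congr rfl fun k _ => Complex.exp_log ?_
  intro h
  have := hlt k
  rw [← sub_eq_zero.1 h] at this
  simp at this

/-- The Jacobi triple product, the limit of `finite_triple` by dominated convergence. The infinite
products are written as exponentials of their logarithmic series. -/
lemma triple_product {q ζ : ℂ} (hq0 : q ≠ 0) (hq : ‖q‖ < 1) (hζ : ζ ≠ 0) (h1 : ‖q * ζ‖ < 1)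
    (h2 : ‖q * ζ⁻¹‖ < 1) {u : ℤ → ℂ} (hu : ThetaSeq q ζ u) :
    ∑' j, u j = (1 - ζ⁻¹) * Complex.exp ((∑' p, lambertTerm 0 q 1 p) +
      ((∑' p, lambertTerm 0 q ζ p) + ∑' p, lambertTerm 0 q ζ⁻¹ p)) := by
  have tP := tendsto_prod_one_sub hq (x := 1) (by simpa using hq)
  simp only [mul_one] at tP
  set L := ∑' p, lambertTerm 0 q 1 p
  have tI := tP.inv₀ (Complex.exp_ne_zero L)
  obtain ⟨C1, hC1⟩ := (Metric.isBounded_range_of_tendsto _ tP).exists_norm_le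
  obtain ⟨C2, hC2⟩ := (Metric.isBounded_range_of_tendsto _ tI).exists_norm_le
  have hC20 : 0 ≤ C2 := (norm_nonneg _).trans (hC2 _ ⟨0, rfl⟩)
  have hC10 : 0 ≤ C1 := (norm_nonneg _).trans (hC1 _ ⟨0, rfl⟩)
  have hr : ∀ m, ‖pochInv q m‖ ≤ C2 := fun m => by
    unfold pochInv
    split_ifs
    · exact hC2 _ ⟨m.toNat, rfl⟩
    · simpa using hC20
  -- each central coefficient tends to `1 / (q;q)_∞`
  have tc : ∀ j : ℤ, Filter.Tendsto (fun n => centralCoeff q n j) Filter.atTop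
      (nhds (Complex.exp L)⁻¹) := by
    intro j
    have tm : ∀ j : ℤ, Filter.Tendsto (fun n : ℕ => pochInv q (n + j)) Filter.atTop
        (nhds (Complex.exp L)⁻¹) := by
      intro j
      have t1 : Filter.Tendsto (fun n : ℕ => ((n : ℤ) + j).toNat) Filter.atTop Filter.atTop := by
        rw [Filter.tendsto_atTop]
        intro b
        filter_upwards [Filter.eventually_ge_atTop (b + j.natAbs)] with n hn
        omega
      refine (tI.comp t1).congr' ?_
      filter_upwards [Filter.eventually_ge_atTop j.natAbs] with n hn
      rw [pochInv, if_pos (by omega)]; rfl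
    have t2 : Filter.Tendsto (fun n : ℕ => 2 * n) Filter.atTop Filter.atTop :=
      Filter.tendsto_id.const_mul_atTop' (by norm_num)
    have := (tP.comp t2).mul ((tm j).mul (tm (-j)))
    rw [mul_inv_cancel_left₀ (Complex.exp_ne_zero L)] at this
    exact this
  have tl : Filter.Tendsto (fun n => ∑' j, u j * centralCoeff q n j) Filter.atTop
      (nhds (∑' j, u j * (Complex.exp L)⁻¹)) := by
    refine tendsto_tsum_of_dominated_convergence (bound := fun j => ‖u j‖ * (C1 * (C2 * C2)))
      (hu.summable.mul_right _) (fun j => (tc j).const_mul _) (Filter.Eventually.of_forall ?_)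
    intro n j
    rw [norm_mul, centralCoeff, norm_mul, norm_mul]
    gcongr
    · exact hC1 _ ⟨2 * n, rfl⟩
    · exact hr _
    · exact hr _
  have tr := ((tendsto_prod_one_sub hq h1).comp (Filter.tendsto_add_atTop_nat 1)).mul
    ((tendsto_prod_one_sub hq h2).const_mul (1 - ζ⁻¹))
  have tl' := tl.comp (Filter.tendsto_add_atTop_nat 1)
  have := tendsto_nhds_unique (tl'.congr fun n => ?_) tr
  · rw [tsum_mul_right] at this
    rw [Complex.exp_add, Complex.exp_add]
    have hL := Complex.exp_ne_zero L
    field_simp at this ⊢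
    linear_combination this
  · simp only [Function.comp_apply]
    rw [finite_triple hq0 hq hζ hu, Finset.prod_mul_distrib,
      Finset.prod_range_succ' (fun k => 1 - q ^ k * ζ⁻¹)]
    simp only [pow_zero, one_mul]
    ring

/-! ### Taylor coefficients of `ϑ` at `z = 0` -/

lemma norm_exp_two_pi (z : ℂ) : ‖Complex.exp (2 * π * I * z)‖ = rexp (-(2 * π * z.im)) := by
  rw [Complex.norm_exp]; congr 1; simp

/-- The general term of the series for `log ∏_{n ≥ 1} (1 - q^n ζ)(1 - q^n ζ⁻¹)` (when `k = 0`) and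
for its `k`-th derivative in `z`. -/
def lamTerm (k : ℕ) (τ z : ℂ) (p : ℕ × ℕ) : ℂ :=
  lambertTerm k (Complex.exp (2 * π * I * τ)) (Complex.exp (2 * π * I * z)) p +
    (-1) ^ k * lambertTerm k (Complex.exp (2 * π * I * τ)) (Complex.exp (2 * π * I * -z)) p

/-- `log ∏_{n ≥ 1} (1 - q^n ζ)(1 - q^n ζ⁻¹)` and its successive derivatives in `z`. -/
def lamD (τ : ℂ) (k : ℕ) (z : ℂ) : ℂ := ∑' p, lamTerm k τ z p

/-- The strip on which the logarithmic expansion of the product converges. -/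
def strip (τ : ℂ) : Set ℂ := {z | |z.im| < τ.im}

lemma isOpen_strip (τ : ℂ) : IsOpen (strip τ) :=
  isOpen_lt (continuous_abs.comp Complex.continuous_im) continuous_const

lemma zero_mem_strip {τ : ℂ} (hτ : 0 < τ.im) : (0 : ℂ) ∈ strip τ := by simpa [strip] using hτ

lemma norm_q_lt_one {τ : ℂ} (hτ : 0 < τ.im) : ‖Complex.exp (2 * π * I * τ)‖ < 1 := by
  rw [norm_exp_two_pi, Real.exp_lt_one_iff, neg_lt_zero]; positivity

lemma norm_q_mul_le {τ z : ℂ} {S : ℝ} (h : |z.im| ≤ S) :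
    ‖Complex.exp (2 * π * I * τ) * Complex.exp (2 * π * I * z)‖ ≤ rexp (2 * π * (S - τ.im)) := by
  rw [norm_mul, norm_exp_two_pi, norm_exp_two_pi, ← Real.exp_add]
  have := (abs_le.1 h).1
  gcongr
  nlinarith [Real.pi_pos]

lemma norm_lamTerm_le (k : ℕ) {τ z : ℂ} (hτ : 0 < τ.im) {S : ℝ} (h : |z.im| ≤ S) (p : ℕ × ℕ) :
    ‖lamTerm k τ z p‖ ≤ 2 * (‖Complex.exp (2 * π * I * τ)‖ ^ p.1 *
      ((p.2 + 1 : ℝ) ^ k * rexp (2 * π * (S - τ.im)) ^ (p.2 + 1))) := by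
  refine (norm_add_le _ _).trans ?_
  rw [norm_mul, norm_pow, norm_neg, norm_one, one_pow, one_mul, two_mul (_ * (_ * _))]
  exact add_le_add (norm_lambertTerm_le k (norm_q_lt_one hτ) (norm_q_mul_le h) p)
    (norm_lambertTerm_le k (norm_q_lt_one hτ) (norm_q_mul_le (by simpa using h)) p)

lemma summable_lamTerm_bound (k : ℕ) {τ : ℂ} (hτ : 0 < τ.im) {S : ℝ} (h : S < τ.im) :
    Summable fun p : ℕ × ℕ => 2 * (‖Complex.exp (2 * π * I * τ)‖ ^ p.1 *
      ((p.2 + 1 : ℝ) ^ k * rexp (2 * π * (S - τ.im)) ^ (p.2 + 1))) := by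
  refine (summable_lambert_bound k (norm_q_lt_one hτ) (Real.exp_nonneg _) ?_).mul_left 2
  rw [Real.exp_lt_one_iff]
  nlinarith [Real.pi_pos]

lemma hasDerivAt_lambertTerm (k : ℕ) (q : ℂ) (p : ℕ × ℕ) (z : ℂ) :
    HasDerivAt (fun w => lambertTerm k q (Complex.exp (2 * π * I * w)) p)
      (2 * π * I * lambertTerm (k + 1) q (Complex.exp (2 * π * I * z)) p) z := by
  have h1 : HasDerivAt (fun w : ℂ => Complex.exp (2 * π * I * w))
      (Complex.exp (2 * π * I * z) * (2 * π * I)) z := by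
    simpa using ((hasDerivAt_id z).const_mul (2 * π * I)).cexp
  have h2 := (((h1.const_mul (q ^ (p.1 + 1))).pow (p.2 + 1)).const_mul
    ((p.2 + 1 : ℂ) ^ k / (p.2 + 1))).neg
  convert! h2 using 1
  rw [lambertTerm]
  push_cast
  ring

lemma chain_lam {τ : ℂ} (hτ : 0 < τ.im) : DerivChain (strip τ) (lamD τ) := by
  intro k z hz
  have hz' : |z.im| < τ.im := hz
  set ε := (τ.im - |z.im|) / 2 with hε
  have hε0 : 0 < ε := by rw [hε]; linarith
  have hb : ∀ w ∈ Metric.ball z ε, |w.im| ≤ |z.im| + ε := fun w hw => by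
    have h1 : |w.im - z.im| ≤ ‖w - z‖ := by simpa using Complex.abs_im_le_norm (w - z)
    have h2 : ‖w - z‖ < ε := by simpa [dist_eq_norm] using hw
    have h3 := abs_sub_abs_le_abs_sub w.im z.im
    linarith
  have key := hasDerivAt_tsum_of_isPreconnected (g := fun p w => lamTerm k τ w p)
    (g' := fun p w => 2 * π * I * lamTerm (k + 1) τ w p) (t := Metric.ball z ε) (y₀ := z) (y := z)
    ((summable_lamTerm_bound (k + 1) hτ (S := |z.im| + ε) (by rw [hε]; linarith)).mul_left
      ‖2 * π * I‖)
    Metric.isOpen_ball (convex_ball z ε).isPreconnected ?_ ?_ (Metric.mem_ball_self hε0)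
    (.of_norm_bounded (summable_lamTerm_bound k hτ hz') (norm_lamTerm_le k hτ le_rfl))
    (Metric.mem_ball_self hε0)
  · rw [tsum_mul_left] at key
    exact key
  · intro p w _
    have h1 := hasDerivAt_lambertTerm k (Complex.exp (2 * π * I * τ)) p w
    have h2 := (hasDerivAt_lambertTerm k (Complex.exp (2 * π * I * τ)) p (-w)).comp w
      (hasDerivAt_neg w)
    convert! h1.add (h2.const_mul ((-1) ^ k)) using 1
    rw [lamTerm, pow_succ]; ring
  · intro p w hw
    rw [norm_mul]
    gcongr
    exact norm_lamTerm_le (k + 1) hτ (hb w hw) p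

/-- The successive derivatives of `ζ^{1/2} - ζ^{-1/2}`. -/
def sinD (k : ℕ) (z : ℂ) : ℂ :=
  (1 / 2) ^ k * (Complex.exp (π * I * z) - (-1) ^ k * Complex.exp (-(π * I * z)))

lemma chain_sin (S : Set ℂ) : DerivChain S sinD := by
  intro k z _
  have h1 : HasDerivAt (fun w : ℂ => Complex.exp (π * I * w))
      (Complex.exp (π * I * z) * (π * I)) z := by
    simpa using ((hasDerivAt_id z).const_mul (π * I)).cexp
  have h2 : HasDerivAt (fun w : ℂ => Complex.exp (-(π * I * w)))
      (Complex.exp (-(π * I * z)) * (-(π * I))) z := by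
    simpa using ((hasDerivAt_id z).const_mul (π * I)).neg.cexp
  convert! (h1.sub (h2.const_mul ((-1) ^ k))).const_mul ((1 / 2) ^ k) using 1
  rw [sinD, pow_succ, pow_succ]
  ring

/-- The theta function divided by `ζ^{1/2} - ζ^{-1/2}`. -/
def thetaG (τ z : ℂ) : ℂ :=
  Complex.exp (π * I * τ / 4) *
    Complex.exp ((∑' p, lambertTerm 0 (Complex.exp (2 * π * I * τ)) 1 p) + lamD τ 0 z)

lemma theta_eq_sin_mul {τ z : ℂ} (hτ : 0 < τ.im) (hz : z ∈ strip τ) :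
    thetaD 0 τ z = sinD 0 z * thetaG τ z := by
  have hr : ∀ w : ℂ, |w.im| < τ.im →
      ‖Complex.exp (2 * π * I * τ) * Complex.exp (2 * π * I * w)‖ < 1 := fun w hw => by
    refine (norm_q_mul_le le_rfl).trans_lt ?_
    rw [Real.exp_lt_one_iff]
    nlinarith [Real.pi_pos]
  have hz' : |z.im| < τ.im := hz
  have hinv : (Complex.exp (2 * π * I * z))⁻¹ = Complex.exp (2 * π * I * -z) := by
    rw [← Complex.exp_neg]; congr 1; ring
  have hu : ThetaSeq (Complex.exp (2 * π * I * τ)) (Complex.exp (2 * π * I * z))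
      (fun n => (-1 : ℂ) ^ n * Complex.exp (π * I * τ * n * (n + 1)) *
        Complex.exp (2 * π * I * z * n)) := by
    refine ⟨by simp, fun j => ?_, ?_⟩
    · rw [← Complex.exp_int_mul, zpow_add₀ (by norm_num), zpow_one]
      have : Complex.exp (π * I * τ * ((j + 1 : ℤ) : ℂ) * (((j + 1 : ℤ) : ℂ) + 1)) *
          Complex.exp (2 * π * I * z * ((j + 1 : ℤ) : ℂ)) =
          Complex.exp (((j + 1 : ℤ) : ℂ) * (2 * π * I * τ)) * Complex.exp (2 * π * I * z) *
          (Complex.exp (π * I * τ * j * (j + 1)) * Complex.exp (2 * π * I * z * j)) := by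
        rw [← Complex.exp_add, ← Complex.exp_add, ← Complex.exp_add, ← Complex.exp_add]
        congr 1; push_cast; ring
      linear_combination (-(-1) ^ j) * this
    · have := (summable_norm_thetaTerm 0 hτ z).mul_left
        ‖Complex.exp (-(π * I * τ / 4 + π * I * z))‖
      refine this.congr fun n => ?_
      rw [← norm_mul, thetaTerm, pow_zero, one_mul, mul_left_comm, ← Complex.exp_add,
        mul_assoc ((-1 : ℂ) ^ n), ← Complex.exp_add]
      congr 3; ring
  have key := triple_product (Complex.exp_ne_zero _) (norm_q_lt_one hτ) (Complex.exp_ne_zero _)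
    (hr z hz') (by rw [hinv]; exact hr (-z) (by simpa using hz')) hu
  rw [← thetaJ_eq_thetaD, thetaJ, key, thetaG, sinD, hinv]
  have hl : lamD τ 0 z =
      (∑' p, lambertTerm 0 (Complex.exp (2 * π * I * τ)) (Complex.exp (2 * π * I * z)) p) +
      ∑' p, lambertTerm 0 (Complex.exp (2 * π * I * τ)) (Complex.exp (2 * π * I * -z)) p := by
    rw [← Summable.tsum_add (summable_lambertTerm 0 (norm_q_lt_one hτ) (hr z hz'))
      (summable_lambertTerm 0 (norm_q_lt_one hτ) (hr (-z) (by simpa using hz')))]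
    refine tsum_congr fun p => ?_
    rw [lamTerm, pow_zero, one_mul]
  rw [hl]
  have h3 : Complex.exp (π * I * z) * Complex.exp (2 * π * I * -z) =
      Complex.exp (-(π * I * z)) := by
    rw [← Complex.exp_add]; congr 1; ring
  rw [pow_zero, one_mul, pow_zero, one_mul, ← h3]
  ring

lemma lamD_zero_odd {k : ℕ} (hk : Odd k) (τ : ℂ) : lamD τ k 0 = 0 := by
  have : ∀ p, lamTerm k τ 0 p = 0 := fun p => by
    rw [lamTerm, hk.neg_one_pow, neg_zero]; ring
  simp [lamD, this]

lemma lamD_zero_even {k : ℕ} (hk : Odd k) {τ : ℂ} (hτ : 0 < τ.im) :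
    lamD τ (k + 1) 0 =
      -2 * ∑' n : ℕ, (sigmaD k (n + 1) : ℂ) * Complex.exp (2 * π * I * τ * (n + 1)) := by
  have hq := norm_q_lt_one hτ
  have h := tsum_prod_pow_eq_tsum_sigma k hq
  rw [← (summable_prod_mul_pow k hq).tsum_prod,
    tsum_pnat_eq_tsum_succ (f := fun e => (ArithmeticFunction.sigma k e : ℂ) *
      Complex.exp (2 * π * I * τ) ^ e),
    ← (Equiv.prodCongr Equiv.pnatEquivNat.symm Equiv.pnatEquivNat.symm).tsum_eq] at h
  have e1 : ∀ n : ℕ, (ArithmeticFunction.sigma k (n + 1) : ℂ) *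
      Complex.exp (2 * π * I * τ) ^ (n + 1) =
      (sigmaD k (n + 1) : ℂ) * Complex.exp (2 * π * I * τ * (n + 1)) := fun n => by
    rw [ArithmeticFunction.sigma_apply, sigmaD, ← Complex.exp_nat_mul]
    congr 2; push_cast; ring
  simp only [e1] at h
  rw [← h, lamD, ← tsum_mul_left]
  refine tsum_congr fun p => ?_
  have hne : ((p.2 : ℂ) + 1) ≠ 0 := Nat.cast_add_one_ne_zero _
  rw [lamTerm, (hk.add_one).neg_one_pow]
  simp [lambertTerm, pow_succ, pow_mul, hne]
  ring

lemma lamD_zero_zero {τ : ℂ} :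
    lamD τ 0 0 = 2 * ∑' p, lambertTerm 0 (Complex.exp (2 * π * I * τ)) 1 p := by
  rw [lamD, ← tsum_mul_left]
  refine tsum_congr fun p => ?_
  simp [lamTerm]; ring

lemma thetaG_zero {τ : ℂ} (hτ : 0 < τ.im) : thetaG τ 0 = etaD τ ^ 3 := by
  have h := tendsto_prod_one_sub (norm_q_lt_one hτ) (x := 1) (by simpa using norm_q_lt_one hτ)
  simp only [mul_one] at h
  have h2 := (ModularForm.multipliable_one_sub_pow (norm_q_lt_one hτ)).hasProd.tendsto_prod_nat
  have h3 := tendsto_nhds_unique h h2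
  have h4 : ∏' n : ℕ, (1 - Complex.exp (2 * π * I * τ * (n + 1))) =
      ∏' n : ℕ, (1 - Complex.exp (2 * π * I * τ) ^ (n + 1)) := by
    refine tprod_congr fun n => ?_
    rw [← Complex.exp_nat_mul]; congr 2; push_cast; ring
  rw [thetaG, etaD, h4, ← h3, lamD_zero_zero, mul_pow, ← Complex.exp_nat_mul, ← Complex.exp_nat_mul]
  congr 2
  · push_cast; ring
  · push_cast; ring

set_option linter.unusedSimpArgs false in
/-- The odd Taylor coefficients of the theta function at `z = 0`. -/
lemma theta_taylor {τ : ℂ} (hτ : 0 < τ.im) :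
    thetaD 1 τ 0 = etaD τ ^ 3 ∧ thetaD 3 τ 0 = Eis2 τ / 4 * thetaD 1 τ 0 ∧
    thetaD 5 τ 0 = (5 / 48 * Eis2 τ ^ 2 - Eis4 τ / 24) * thetaD 1 τ 0 ∧
    thetaD 7 τ 0 = (Eis6 τ / 36 - 7 / 96 * Eis2 τ * Eis4 τ + 35 / 576 * Eis2 τ ^ 3) *
      thetaD 1 τ 0 := by
  have h0 := zero_mem_strip hτ
  have hd : ∀ z ∈ strip τ, HasDerivAt (thetaG τ) (2 * π * I * (lamD τ 1 z * thetaG τ z)) z := by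
    intro z hz
    have h1 := (((chain_lam hτ) 0 z hz).const_add
      (∑' p, lambertTerm 0 (Complex.exp (2 * π * I * τ)) 1 p)).cexp.const_mul
      (Complex.exp (π * I * τ / 4))
    convert! h1 using 1
    rw [thetaG]; ring
  have cG := DerivChain.of_differentiableOn (isOpen_strip τ)
    (fun z hz => (hd z hz).differentiableAt.differentiableWithinAt)
  obtain ⟨g, hg⟩ : ∃ g : ℕ → ℂ → ℂ, g = fun k y =>
    (2 * π * I)⁻¹ ^ k * iteratedDeriv k (thetaG τ) y := ⟨_, rfl⟩
  rw [← hg] at cG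
  have hg0 : ∀ z, g 0 z = thetaG τ z := fun z => by simp [hg]
  have hG := (cG.shift 1).eqOn (isOpen_strip τ) (((chain_lam hτ).shift 1).leibniz cG)
    (fun z hz => by
      have h1 := cG 0 z hz
      rw [funext hg0] at h1
      have := h1.unique (hd z hz)
      have := mul_left_cancel₀ two_pi_I_ne_zero this
      simpa [leibniz, hg0] using this)
  have hθ := (chain_theta hτ (strip τ)).eqOn (isOpen_strip τ) ((chain_sin (strip τ)).leibniz cG)
    (fun z hz => by simpa [leibniz, hg0] using theta_eq_sin_mul hτ hz)
  have l1 : lamD τ 1 0 = 0 := lamD_zero_odd (by decide) τ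
  have l3 : lamD τ 3 0 = 0 := lamD_zero_odd (by decide) τ
  have l5 : lamD τ 5 0 = 0 := lamD_zero_odd (by decide) τ
  have l2 : lamD τ 2 0 = (Eis2 τ - 1) / 12 := by
    rw [lamD_zero_even (k := 1) (by decide) hτ, Eis2]; ring
  have l4 : lamD τ 4 0 = -(Eis4 τ - 1) / 120 := by
    rw [lamD_zero_even (k := 3) (by decide) hτ, Eis4]; ring
  have l6 : lamD τ 6 0 = (Eis6 τ - 1) / 252 := by
    rw [lamD_zero_even (k := 5) (by decide) hτ, Eis6]; ring
  have g0 : g 0 0 = etaD τ ^ 3 := by rw [hg0, thetaG_zero hτ]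
  have g1 := hG 0 h0
  have g2 := hG 1 h0
  have g3 := hG 2 h0
  have g4 := hG 3 h0
  have g5 := hG 4 h0
  have g6 := hG 5 h0
  simp [leibniz, Finset.Nat.antidiagonal_succ, Nat.choose, l1, l2, l3, l4, l5, l6, g0] at g1
  simp [leibniz, Finset.Nat.antidiagonal_succ, Nat.choose, l1, l2, l3, l4, l5, l6, g0, g1] at g2
  simp [leibniz, Finset.Nat.antidiagonal_succ, Nat.choose, l1, l2, l3, l4, l5, l6, g0, g1, g2] at g3
  simp [leibniz, Finset.Nat.antidiagonal_succ, Nat.choose, l1, l2, l3, l4, l5, l6, g0, g1, g2,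
    g3] at g4
  simp [leibniz, Finset.Nat.antidiagonal_succ, Nat.choose, l1, l2, l3, l4, l5, l6, g0, g1, g2,
    g3, g4] at g5
  simp [leibniz, Finset.Nat.antidiagonal_succ, Nat.choose, l1, l2, l3, l4, l5, l6, g0, g1, g2,
    g3, g4, g5] at g6
  have t1 := hθ 1 h0
  have t3 := hθ 3 h0
  have t5 := hθ 5 h0
  have t7 := hθ 7 h0
  simp [leibniz, Finset.Nat.antidiagonal_succ, Nat.choose, sinD, g0, g1] at t1
  simp [leibniz, Finset.Nat.antidiagonal_succ, Nat.choose, sinD, g0, g1, g2, g3] at t3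
  simp [leibniz, Finset.Nat.antidiagonal_succ, Nat.choose, sinD, g0, g1, g2, g3, g4, g5] at t5
  simp [leibniz, Finset.Nat.antidiagonal_succ, Nat.choose, sinD, g0, g1, g2, g3, g4, g5, g6] at t7
  have e1 : thetaD 1 τ 0 = etaD τ ^ 3 := by rw [t1]; ring
  refine ⟨e1, ?_, ?_, ?_⟩
  · rw [t3, e1]; ring
  · rw [t5, e1]; ring
  · rw [t7, e1]; ring

lemma etaD_ne_zero {τ : ℂ} (hτ : 0 < τ.im) : etaD τ ≠ 0 := by
  have h := thetaG_zero hτ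
  intro h0
  rw [h0, zero_pow (by norm_num)] at h
  exact mul_ne_zero (Complex.exp_ne_zero _) (Complex.exp_ne_zero _) h

/-! ### `Δ` in terms of `E₄` and `E₆` -/

lemma Eis_bernoulli {k : ℕ} (hk : 3 ≤ k) (hk2 : Even k) {τ : ℂ} (hτ : 0 < τ.im) :
    ModularForm.E hk ⟨τ, hτ⟩ = 1 - (2 * k / bernoulli k) *
      ∑' n : ℕ, (sigmaD (k - 1) (n + 1) : ℂ) * Complex.exp (2 * π * I * τ * (n + 1)) := by
  have h := EisensteinSeries.q_expansion_bernoulli hk hk2 ⟨τ, hτ⟩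
  simp_rw [zpow_natCast] at h
  rw [h, tsum_pnat_eq_tsum_succ (f := fun n => (ArithmeticFunction.sigma (k - 1) n : ℂ) *
    Complex.exp (2 * π * I * ((⟨τ, hτ⟩ : UpperHalfPlane) : ℂ)) ^ n)]
  congr 2
  refine tsum_congr fun n => ?_
  rw [ArithmeticFunction.sigma_apply, sigmaD, ← Complex.exp_nat_mul]
  congr 2
  push_cast
  ring

/-- `Δ = (E₄³ - E₆²)/1728`. -/
lemma delta_eq {τ : ℂ} (hτ : 0 < τ.im) :
    DeltaR τ = (Eis4 τ ^ 3 - Eis6 τ ^ 2) / 1728 := by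
  have h4 : Eis4 τ = ModularForm.E₄ ⟨τ, hτ⟩ := by
    rw [ModularForm.E₄, Eis_bernoulli _ ⟨2, rfl⟩ hτ, Eis4,
      show bernoulli 4 = -1 / 30 by
        rw [bernoulli_eq_bernoulli'_of_ne_one (by norm_num), bernoulli'_four]]
    norm_num
  have h6 : Eis6 τ = ModularForm.E₆ ⟨τ, hτ⟩ := by
    rw [ModularForm.E₆, Eis_bernoulli _ ⟨3, rfl⟩ hτ, Eis6,
      show bernoulli 6 = 1 / 42 by
        rw [bernoulli_eq_bernoulli'_of_ne_one (by norm_num), bernoulli'_def]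
        norm_num [Finset.sum_range_succ, bernoulli'_zero, bernoulli'_one, bernoulli'_two,
          bernoulli'_three, bernoulli'_four, bernoulli'_eq_zero_of_odd (n := 5) (by decide)
            (by norm_num), Nat.choose]]
    norm_num
  rw [h4, h6, ← ModularForm.discriminant_eq_E₄_cube_sub_E₆_sq, DeltaR,
    ModularForm.discriminant, etaD, ModularForm.eta]
  congr 2
  · rw [Function.Periodic.qParam]
    congr 1
    push_cast
    ring
  · refine tprod_congr fun n => ?_
    rw [ModularForm.eta_q_eq_cexp]
    congr 2
    push_cast
    ring

/-! ### The Weierstrass function and Ramanujan's formulas -/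

/-- The quotient `ϑ⁽ᵏ⁾/ϑ`, derivatives taken with respect to `(2πi)⁻¹ d/dz`. -/
def xq (k : ℕ) (τ z : ℂ) : ℂ := thetaD k τ z / thetaD 0 τ z

/-- The Weierstrass function `(2πi)⁻² ℘(τ, z)`, as `E₂/12` minus the second logarithmic derivative
of `ϑ`. -/
def wpP (τ z : ℂ) : ℂ := Eis2 τ / 12 - xq 2 τ z + xq 1 τ z ^ 2

/-- The derivative `(2πi)⁻³ ℘'(τ, z)`. -/
def wpQ (τ z : ℂ) : ℂ := -xq 3 τ z + 3 * xq 1 τ z * xq 2 τ z - 2 * xq 1 τ z ^ 3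

section
variable {τ z : ℂ}

lemma hasDerivAt_xq_z (k : ℕ) (hτ : 0 < τ.im) (h0 : thetaD 0 τ z ≠ 0) :
    HasDerivAt (fun w => xq k τ w) (2 * π * I * (xq (k + 1) τ z - xq k τ z * xq 1 τ z)) z := by
  refine ((hasDerivAt_thetaD_z k hτ z).fun_div (hasDerivAt_thetaD_z 0 hτ z) h0).congr_deriv ?_
  simp only [xq]
  field_simp

lemma hasDerivAt_xq_tau (k : ℕ) (hτ : 0 < τ.im) (h0 : thetaD 0 τ z ≠ 0) :
    HasDerivAt (fun t => xq k t z) (π * I * (xq (k + 2) τ z - xq k τ z * xq 2 τ z)) τ := by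
  refine ((hasDerivAt_thetaD_tau k hτ z).fun_div (hasDerivAt_thetaD_tau 0 hτ z) h0).congr_deriv ?_
  simp only [xq]
  field_simp

lemma eventually_theta_ne_z (hτ : 0 < τ.im) (h0 : thetaD 0 τ z ≠ 0) :
    ∀ᶠ w in nhds z, thetaD 0 τ w ≠ 0 :=
  (hasDerivAt_thetaD_z 0 hτ z).continuousAt.eventually_ne h0

lemma eventually_im_pos (hτ : 0 < τ.im) : ∀ᶠ t : ℂ in nhds τ, 0 < t.im :=
  Complex.continuous_im.continuousAt.eventually (lt_mem_nhds hτ)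

lemma eventually_theta_ne_tau (hτ : 0 < τ.im) (h0 : thetaD 0 τ z ≠ 0) :
    ∀ᶠ t in nhds τ, 0 < t.im ∧ thetaD 0 t z ≠ 0 :=
  (eventually_im_pos hτ).and ((hasDerivAt_thetaD_tau 0 hτ z).continuousAt.eventually_ne h0)

lemma thetaD_one_zero_ne (hτ : 0 < τ.im) : thetaD 1 τ 0 ≠ 0 := by
  rw [(theta_taylor hτ).1]
  exact pow_ne_zero _ (etaD_ne_zero hτ)

lemma xq_ode_four (hτ : 0 < τ.im) (h0 : thetaD 0 τ z ≠ 0) :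
    xq 4 τ z - 4 * (xq 1 τ z * xq 3 τ z) + 3 * xq 2 τ z ^ 2 =
      Eis2 τ * (xq 2 τ z - xq 1 τ z ^ 2) - (Eis2 τ ^ 2 - Eis4 τ) / 24 := by
  have h1 := thetaD_one_zero_ne hτ
  obtain ⟨-, e3, e5, -⟩ := theta_taylor hτ
  have h := theta_ode_four hτ z
  rw [wronD_zero, e3, e5] at h
  simp only [xq]
  generalize thetaD 1 τ 0 = t at *
  have h' : 2 * thetaD 0 τ z * thetaD 4 τ z - 8 * thetaD 1 τ z * thetaD 3 τ z +
      6 * thetaD 2 τ z ^ 2 = 2 * Eis2 τ * (thetaD 0 τ z * thetaD 2 τ z - thetaD 1 τ z ^ 2) -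
      thetaD 0 τ z ^ 2 * (Eis2 τ ^ 2 - Eis4 τ) / 12 := by
    apply mul_left_cancel₀ (pow_ne_zero 2 h1)
    linear_combination h
  field_simp
  linear_combination 12 * h'

lemma xq_ode_six (hτ : 0 < τ.im) (h0 : thetaD 0 τ z ≠ 0) :
    xq 6 τ z - 6 * xq 1 τ z * xq 5 τ z + 15 * xq 2 τ z * xq 4 τ z - 10 * xq 3 τ z ^ 2 =
      (5 / 4 * Eis2 τ ^ 2 - Eis4 τ / 4) * (xq 2 τ z - xq 1 τ z ^ 2)
      - (Eis6 τ / 18 - Eis2 τ * Eis4 τ / 8 + 5 / 72 * Eis2 τ ^ 3) := by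
  have h1 := thetaD_one_zero_ne hτ
  obtain ⟨-, e3, e5, e7⟩ := theta_taylor hτ
  have h := theta_ode_six hτ z
  rw [wronD_zero, e3, e5, e7] at h
  simp only [xq]
  generalize thetaD 1 τ 0 = t at *
  have hdiv : 2 * thetaD 0 τ z * thetaD 6 τ z - 12 * thetaD 1 τ z * thetaD 5 τ z +
      30 * thetaD 2 τ z * thetaD 4 τ z - 20 * thetaD 3 τ z ^ 2 =
      (5 / 2 * Eis2 τ ^ 2 - Eis4 τ / 2) * (thetaD 0 τ z * thetaD 2 τ z - thetaD 1 τ z ^ 2) -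
      thetaD 0 τ z ^ 2 * (Eis6 τ / 9 - Eis2 τ * Eis4 τ / 4 + 5 / 36 * Eis2 τ ^ 3) := by
    apply mul_left_cancel₀ (pow_ne_zero 2 h1)
    linear_combination h
  field_simp
  linear_combination 20736 * hdiv

/-- The `z`-derivative of `xq_ode_four`. -/
lemma xq_ode_five (hτ : 0 < τ.im) (h0 : thetaD 0 τ z ≠ 0) :
    xq 5 τ z - 5 * (xq 1 τ z * xq 4 τ z) + 2 * (xq 2 τ z * xq 3 τ z) +
      8 * (xq 1 τ z ^ 2 * xq 3 τ z) - 6 * (xq 1 τ z * xq 2 τ z ^ 2) =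
      Eis2 τ * (xq 3 τ z - 3 * (xq 1 τ z * xq 2 τ z) + 2 * xq 1 τ z ^ 3) := by
  have hx := fun k => hasDerivAt_xq_z (z := z) k hτ h0
  have hl := ((hx 4).fun_sub (((hx 1).fun_mul (hx 3)).const_mul 4)).fun_add
    (((hx 2).fun_pow 2).const_mul 3)
  have hr := (((hx 2).fun_sub ((hx 1).fun_pow 2)).const_mul (Eis2 τ)).sub_const
    ((Eis2 τ ^ 2 - Eis4 τ) / 24)
  have := hl.unique (hr.congr_of_eventuallyEq ((eventually_theta_ne_z hτ h0).mono
    fun w hw => xq_ode_four hτ hw))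
  apply mul_left_cancel₀ Complex.two_pi_I_ne_zero
  linear_combination this

/-- The first integral `℘'² = 4 ℘³ - g₂ ℘ - g₃`. -/
lemma wp_first_integral (hτ : 0 < τ.im) (h0 : thetaD 0 τ z ≠ 0) :
    wpQ τ z ^ 2 = 4 * wpP τ z ^ 3 - Eis4 τ * wpP τ z / 12 + Eis6 τ / 216 := by
  have hx := fun k => hasDerivAt_xq_z (z := z) k hτ h0
  have hl := ((((hx 5).fun_sub (((hx 1).fun_mul (hx 4)).const_mul 5)).fun_add
    (((hx 2).fun_mul (hx 3)).const_mul 2)).fun_add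
    ((((hx 1).fun_pow 2).fun_mul (hx 3)).const_mul 8)).fun_sub
    (((hx 1).fun_mul ((hx 2).fun_pow 2)).const_mul 6)
  have hr := ((((hx 3).fun_sub (((hx 1).fun_mul (hx 2)).const_mul 3)).fun_add
    (((hx 1).fun_pow 3).const_mul 2)).const_mul (Eis2 τ))
  have h := hl.unique (hr.congr_of_eventuallyEq ((eventually_theta_ne_z hτ h0).mono
    fun w hw => xq_ode_five hτ hw))
  -- The difference of `h` and `xq_ode_six` is free of `ϑ⁽⁵⁾` and `ϑ⁽⁶⁾`.
  apply mul_left_cancel₀ Complex.two_pi_I_ne_zero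
  simp only [wpP, wpQ]
  linear_combination (-1 / 12) * (2 * π * I) * xq_ode_six hτ h0 + (1 / 12) * h +
    (18 * (xq 2 τ z - xq 1 τ z ^ 2) + Eis2 τ) / 12 * (2 * π * I) * xq_ode_four hτ h0

lemma hasDerivAt_wpP_z (hτ : 0 < τ.im) (h0 : thetaD 0 τ z ≠ 0) :
    HasDerivAt (fun w => wpP τ w) (2 * π * I * wpQ τ z) z := by
  have hx := fun k => hasDerivAt_xq_z (z := z) k hτ h0
  refine (((hx 2).const_sub (Eis2 τ / 12)).fun_add ((hx 1).fun_pow 2)).congr_deriv ?_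
  simp only [wpQ]
  push_cast
  ring

lemma hasDerivAt_wpQ_z (hτ : 0 < τ.im) (h0 : thetaD 0 τ z ≠ 0) :
    HasDerivAt (fun w => wpQ τ w) (2 * π * I * (6 * wpP τ z ^ 2 - Eis4 τ / 24)) z := by
  have hx := fun k => hasDerivAt_xq_z (z := z) k hτ h0
  refine (((hx 3).fun_neg.fun_add (((hx 1).const_mul 3).fun_mul (hx 2))).fun_sub
    (((hx 1).fun_pow 3).const_mul 2)).congr_deriv ?_
  simp only [wpP]
  linear_combination (-2 * π * I) * xq_ode_four hτ h0

/-- Ramanujan's formula for the derivative of `E₂`, by the heat equation for `ϑ'(0)` and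
`ϑ'''(0)`. -/
lemma hasDerivAt_Eis2 (hτ : 0 < τ.im) :
    HasDerivAt Eis2 (2 * π * I * ((Eis2 τ ^ 2 - Eis4 τ) / 12)) τ := by
  have h1 := thetaD_one_zero_ne hτ
  have h := ((hasDerivAt_thetaD_tau 3 hτ 0).fun_div (hasDerivAt_thetaD_tau 1 hτ 0) h1).const_mul 4
  have he : Eis2 =ᶠ[nhds τ] fun t => 4 * (thetaD 3 t 0 / thetaD 1 t 0) :=
    (eventually_im_pos hτ).mono fun t ht => by
      have := thetaD_one_zero_ne ht
      beta_reduce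
      rw [(theta_taylor ht).2.1]
      field_simp
  refine (h.congr_of_eventuallyEq he).congr_deriv ?_
  obtain ⟨-, e3, e5, -⟩ := theta_taylor hτ
  simp only [Nat.reduceAdd, e3, e5]
  field_simp
  ring

/-- Ramanujan's formula for the derivative of `E₄`. -/
lemma hasDerivAt_Eis4 (hτ : 0 < τ.im) :
    HasDerivAt Eis4 (2 * π * I * ((Eis2 τ * Eis4 τ - Eis6 τ) / 3)) τ := by
  have h1 := thetaD_one_zero_ne hτ
  have h := (((hasDerivAt_thetaD_tau 5 hτ 0).fun_div
    (hasDerivAt_thetaD_tau 1 hτ 0) h1).const_mul (-24)).fun_add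
    (((hasDerivAt_Eis2 hτ).fun_pow 2).const_mul (5 / 2))
  have he : Eis4 =ᶠ[nhds τ] fun t => -24 * (thetaD 5 t 0 / thetaD 1 t 0) + 5 / 2 * Eis2 t ^ 2 :=
    (eventually_im_pos hτ).mono fun t ht => by
      have := thetaD_one_zero_ne ht
      beta_reduce
      rw [(theta_taylor ht).2.2.1]
      field_simp
      ring
  refine (h.congr_of_eventuallyEq he).congr_deriv ?_
  obtain ⟨-, e3, e5, e7⟩ := theta_taylor hτ
  simp only [Nat.reduceAdd, e3, e5, e7]
  field_simp
  push_cast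
  ring

lemma hasDerivAt_wpP_tau (hτ : 0 < τ.im) (h0 : thetaD 0 τ z ≠ 0) :
    HasDerivAt (fun t => wpP t z) (2 * π * I * (2 * wpP τ z ^ 2 + Eis2 τ * wpP τ z / 6 -
      Eis4 τ / 36 + xq 1 τ z * wpQ τ z)) τ := by
  have hx := fun k => hasDerivAt_xq_tau (z := z) k hτ h0
  refine ((((hasDerivAt_Eis2 hτ).div_const 12).fun_sub (hx 2)).fun_add
    ((hx 1).fun_pow 2)).congr_deriv ?_
  simp only [wpP, wpQ]
  linear_combination (-π * I) * xq_ode_four hτ h0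

/-- Ramanujan's formula for the derivative of `E₆`, by differentiating the first integral in `τ`
at an auxiliary point `z`. -/
lemma hasDerivAt_Eis6 (hτ : 0 < τ.im) (h0 : thetaD 0 τ z ≠ 0) :
    HasDerivAt Eis6 (2 * π * I * ((Eis2 τ * Eis6 τ - Eis4 τ ^ 2) / 2)) τ := by
  have hx := fun k => hasDerivAt_xq_tau (z := z) k hτ h0
  have hQ : HasDerivAt (fun t => wpQ t z) _ τ :=
    ((hx 3).fun_neg.fun_add (((hx 1).const_mul 3).fun_mul (hx 2))).fun_sub
      (((hx 1).fun_pow 3).const_mul 2)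
  have hP := hasDerivAt_wpP_tau hτ h0
  have h := (((hQ.fun_pow 2).fun_sub ((hP.fun_pow 3).const_mul 4)).fun_add
    (((hasDerivAt_Eis4 hτ).fun_mul hP).div_const 12)).const_mul 216
  have he : Eis6 =ᶠ[nhds τ] fun t =>
      216 * (wpQ t z ^ 2 - 4 * wpP t z ^ 3 + Eis4 t * wpP t z / 12) :=
    (eventually_theta_ne_tau hτ h0).mono fun t ht => by
      beta_reduce
      rw [wp_first_integral ht.1 ht.2]
      ring
  refine (h.congr_of_eventuallyEq he).congr_deriv ?_
  have hF := wp_first_integral hτ h0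
  have h4 := xq_ode_four hτ h0
  have h5 := xq_ode_five hτ h0
  simp only [wpP, wpQ, Nat.reduceAdd] at hF ⊢
  linear_combination (2 * π * I) *
    ((-xq 3 τ z + 3 * xq 1 τ z * xq 2 τ z - 2 * xq 1 τ z ^ 3) * (-216 * h5 - 432 * xq 1 τ z * h4) +
      (108 * Eis2 τ + 1296 * (Eis2 τ / 12 - xq 2 τ z + xq 1 τ z ^ 2)) * hF)

end

/-! ### The heat operator on `φ_{-2,1}³ f(℘)` -/

/-- The weight `-6`, index `3` form `ϑ⁶/η¹⁸ = φ_{-2,1}³`, with `η³` written as the normalised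
derivative `ϑ'(τ, 0)`. -/
def thetaW (τ z : ℂ) : ℂ := thetaD 0 τ z ^ 6 / thetaD 1 τ 0 ^ 6

section
variable {τ z : ℂ}

lemma hasDerivAt_thetaW_z (hτ : 0 < τ.im) (z : ℂ) :
    HasDerivAt (fun w => thetaW τ w) (2 * π * I * (6 * xq 1 τ z * thetaW τ z)) z := by
  refine (((hasDerivAt_thetaD_z 0 hτ z).fun_pow 6).div_const (thetaD 1 τ 0 ^ 6)).congr_deriv ?_
  simp only [thetaW, xq]
  field_simp
  push_cast
  ring

lemma hasDerivAt_thetaW_tau (hτ : 0 < τ.im) (h0 : thetaD 0 τ z ≠ 0) :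
    HasDerivAt (fun t => thetaW t z)
      (2 * π * I * ((3 * xq 2 τ z - 3 / 4 * Eis2 τ) * thetaW τ z)) τ := by
  have h1 := thetaD_one_zero_ne hτ
  refine (((hasDerivAt_thetaD_tau 0 hτ z).fun_pow 6).fun_div
    ((hasDerivAt_thetaD_tau 1 hτ 0).fun_pow 6) (pow_ne_zero 6 h1)).congr_deriv ?_
  simp only [thetaW, xq, Nat.reduceAdd, (theta_taylor hτ).2.1]
  field_simp
  push_cast
  ring

/-- The action of the modular heat operator of index `3` on `φ_{-2,1}³ · f(℘)`, where `f` is a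
cubic polynomial with coefficients `cᵢ(τ)`: by the differential equations of `℘`, all terms
containing `ϑ'/ϑ` cancel and the result is again `φ_{-2,1}³` times a polynomial in `℘`. -/
lemma heatMod_cubic {φ : ℂ → ℂ → ℂ} {c₀ c₁ c₂ c₃ : ℂ → ℂ} {d₀ d₁ d₂ d₃ : ℂ} (k : ℚ)
    (hφ : ∀ t w : ℂ, 0 < t.im → thetaD 0 t w ≠ 0 → φ t w = thetaW t w *
      (c₃ t * wpP t w ^ 3 + c₂ t * wpP t w ^ 2 + c₁ t * wpP t w + c₀ t))
    (hτ : 0 < τ.im) (h0 : thetaD 0 τ z ≠ 0)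
    (hc₀ : HasDerivAt c₀ (2 * π * I * d₀) τ) (hc₁ : HasDerivAt c₁ (2 * π * I * d₁) τ)
    (hc₂ : HasDerivAt c₂ (2 * π * I * d₂) τ) (hc₃ : HasDerivAt c₃ (2 * π * I * d₃) τ) :
    heatMod 3 k φ τ z = thetaW τ z *
      ((-30 * wpP τ z - (6 + k) * Eis2 τ) *
          (c₃ τ * wpP τ z ^ 3 + c₂ τ * wpP τ z ^ 2 + c₁ τ * wpP τ z + c₀ τ)
        + 12 * (d₃ * wpP τ z ^ 3 + d₂ * wpP τ z ^ 2 + d₁ * wpP τ z + d₀)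
        + (18 * wpP τ z ^ 2 + 2 * Eis2 τ * wpP τ z - 7 / 24 * Eis4 τ) *
          (3 * c₃ τ * wpP τ z ^ 2 + 2 * c₂ τ * wpP τ z + c₁ τ)
        - (4 * wpP τ z ^ 3 - Eis4 τ * wpP τ z / 12 + Eis6 τ / 216) *
          (6 * c₃ τ * wpP τ z + 2 * c₂ τ)) := by
  have hπ : (π : ℂ) ≠ 0 := by exact_mod_cast Real.pi_ne_zero
  have hx2 : xq 2 τ z = xq 1 τ z ^ 2 + Eis2 τ / 12 - wpP τ z := by simp only [wpP]; ring
  have hQ2 := wp_first_integral hτ h0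
  -- derivative in `τ`
  have hPt := hasDerivAt_wpP_tau hτ h0
  have ht := (hasDerivAt_thetaW_tau hτ h0).fun_mul
    ((((hc₃.fun_mul (hPt.fun_pow 3)).fun_add (hc₂.fun_mul (hPt.fun_pow 2))).fun_add
      (hc₁.fun_mul hPt)).fun_add hc₀)
  have et : deriv (fun t => φ t z) τ = 2 * π * I *
      (thetaW τ z * ((3 * (xq 1 τ z ^ 2 + Eis2 τ / 12 - wpP τ z) - 3 / 4 * Eis2 τ) *
          (c₃ τ * wpP τ z ^ 3 + c₂ τ * wpP τ z ^ 2 + c₁ τ * wpP τ z + c₀ τ)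
        + (d₃ * wpP τ z ^ 3 + d₂ * wpP τ z ^ 2 + d₁ * wpP τ z + d₀)
        + (2 * wpP τ z ^ 2 + Eis2 τ * wpP τ z / 6 - Eis4 τ / 36 + xq 1 τ z * wpQ τ z) *
          (3 * c₃ τ * wpP τ z ^ 2 + 2 * c₂ τ * wpP τ z + c₁ τ))) := by
    rw [(ht.congr_of_eventuallyEq
      ((eventually_theta_ne_tau hτ h0).mono fun t h => hφ t z h.1 h.2)).deriv, hx2]
    push_cast
    ring
  -- first derivative in `z`, valid near `z`
  have ez1 : deriv (φ τ) =ᶠ[nhds z] fun w => thetaW τ w * (6 * xq 1 τ w *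
      (c₃ τ * wpP τ w ^ 3 + c₂ τ * wpP τ w ^ 2 + c₁ τ * wpP τ w + c₀ τ) +
      (3 * c₃ τ * wpP τ w ^ 2 + 2 * c₂ τ * wpP τ w + c₁ τ) * wpQ τ w) * (2 * π * I) := by
    filter_upwards [eventually_theta_ne_z hτ h0] with w hw
    have hP := hasDerivAt_wpP_z hτ hw
    have h := (hasDerivAt_thetaW_z hτ w).fun_mul
      (((((hP.fun_pow 3).const_mul (c₃ τ)).fun_add ((hP.fun_pow 2).const_mul (c₂ τ))).fun_add
        (hP.const_mul (c₁ τ))).add_const (c₀ τ))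
    have := (h.congr_of_eventuallyEq
      ((eventually_theta_ne_z hτ hw).mono fun v hv => hφ τ v hτ hv)).deriv
    rw [show deriv (φ τ) w = deriv (fun v => φ τ v) w from rfl, this]
    push_cast
    ring
  have hP := hasDerivAt_wpP_z hτ h0
  have hx1 := hasDerivAt_xq_z (z := z) 1 hτ h0
  have hz := ((hasDerivAt_thetaW_z hτ z).fun_mul (((hx1.const_mul 6).fun_mul
      (((((hP.fun_pow 3).const_mul (c₃ τ)).fun_add ((hP.fun_pow 2).const_mul (c₂ τ))).fun_add
        (hP.const_mul (c₁ τ))).add_const (c₀ τ))).fun_add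
      (((((hP.fun_pow 2).const_mul (3 * c₃ τ)).fun_add (hP.const_mul (2 * c₂ τ))).add_const
        (c₁ τ)).fun_mul (hasDerivAt_wpQ_z hτ h0)))).mul_const (2 * π * I)
  have ez : deriv (deriv (φ τ)) z = (2 * π * I) ^ 2 *
      (thetaW τ z * ((36 * xq 1 τ z ^ 2 + 6 * (Eis2 τ / 12 - wpP τ z)) *
          (c₃ τ * wpP τ z ^ 3 + c₂ τ * wpP τ z ^ 2 + c₁ τ * wpP τ z + c₀ τ)
        + (12 * xq 1 τ z * wpQ τ z + 6 * wpP τ z ^ 2 - Eis4 τ / 24) *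
          (3 * c₃ τ * wpP τ z ^ 2 + 2 * c₂ τ * wpP τ z + c₁ τ)
        + wpQ τ z ^ 2 * (6 * c₃ τ * wpP τ z + 2 * c₂ τ))) := by
    rw [(hz.congr_of_eventuallyEq ez1).deriv, one_add_one_eq_two, hx2]
    push_cast
    ring
  have e1 : ∀ a : ℂ, 12 / (2 * π * I) * (2 * π * I * a) = 12 * a := fun a => by
    field_simp
  have e2 : ∀ a : ℂ, 3 / (4 * π ^ 2 * ((3 : ℚ) : ℂ)) * ((2 * π * I) ^ 2 * a) = -a := fun a => by
    push_cast
    field_simp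
    rw [I_sq]
    ring
  rw [heatMod, heatOp, et, ez, e1, e2, hφ τ z hτ h0, hQ2]
  ring

/-- `φ_{0,3} = φ_{-2,1}³ ℘'²`, by the duplication formula, followed by the first integral. -/
lemma phi03_eq (hτ : 0 < τ.im) (h0 : thetaD 0 τ z ≠ 0) :
    phi03 τ z = thetaW τ z *
      (4 * wpP τ z ^ 3 + 0 * wpP τ z ^ 2 + (-1 / 12 * Eis4 τ) * wpP τ z + Eis6 τ / 216) := by
  have h1 := thetaD_one_zero_ne hτ
  have hd := theta_double hτ z
  have hW : wronD τ 1 z = thetaD 0 τ z * thetaD 3 τ z - thetaD 1 τ z * thetaD 2 τ z := by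
    simp [wronD, leibniz, Finset.Nat.antidiagonal_succ]
    ring
  have h2 : thetaJ τ (2 * z) = -thetaD 0 τ z ^ 4 * wpQ τ z / thetaD 1 τ 0 ^ 3 := by
    rw [thetaJ_eq_thetaD, eq_div_iff (pow_ne_zero 3 h1), mul_comm, hd, wronD_zero, hW]
    simp only [wpQ, xq]
    field_simp
    ring
  have hf : phi03 τ z = thetaW τ z * wpQ τ z ^ 2 := by
    rw [phi03, h2, thetaJ_eq_thetaD, thetaW]
    field_simp
  rw [hf, wp_first_integral hτ h0]
  ring

end

/-- the non-homogeneous third-order identity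
`H^{(3)}_{4}H^{(3)}_{2}H^{(3)}_{0}(φ_{0,3}) − (33/4)·E₄·H^{(3)}_{0}(φ_{0,3}) + (3/2)·E₆·φ_{0,3}
 = 60·Δ·φ_{−2,1}³` where `ϑ(τ,z) ≠ 0`. -/
theorem statement18 (τ z : ℂ) (hτ : 0 < τ.im) (hθ : thetaJ τ z ≠ 0) :
    heatMod 3 4 (heatMod 3 2 (heatMod 3 0 phi03)) τ z
      - (33/4) * Eis4 τ * heatMod 3 0 phi03 τ z
      + (3/2) * Eis6 τ * phi03 τ z
      = 60 * DeltaR τ * phim21 τ z ^ 3 := by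
  have hconst : ∀ (c t : ℂ), HasDerivAt (fun _ : ℂ => c) (2 * π * I * 0) t := fun c t =>
    (hasDerivAt_const t c).congr_deriv (by ring)
  have H1 : ∀ t w : ℂ, 0 < t.im → thetaD 0 t w ≠ 0 → heatMod 3 0 phi03 t w = thetaW t w *
      (0 * wpP t w ^ 3 + (-1 / 2 * Eis4 t) * wpP t w ^ 2 + (Eis6 t / 12) * wpP t w +
        -1 / 288 * Eis4 t ^ 2) := fun t w ht hw => by
    rw [heatMod_cubic 0 (fun t w ht hw => phi03_eq ht hw) ht hw
      (d₀ := (Eis2 t * Eis6 t - Eis4 t ^ 2) / 432)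
      (d₁ := -(Eis2 t * Eis4 t - Eis6 t) / 36) (d₂ := 0) (d₃ := 0)
      (((hasDerivAt_Eis6 ht hw).div_const 216).congr_deriv (by ring))
      (((hasDerivAt_Eis4 ht).const_mul (-1 / 12)).congr_deriv (by ring))
      (hconst _ _) (hconst _ _)]
    push_cast
    ring
  have H2 : ∀ t w : ℂ, 0 < t.im → thetaD 0 t w ≠ 0 →
      heatMod 3 2 (heatMod 3 0 phi03) t w = thetaW t w *
      (Eis4 t * wpP t w ^ 3 + Eis6 t * wpP t w ^ 2 + (-3 / 16 * Eis4 t ^ 2) * wpP t w +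
        7 / 864 * (Eis4 t * Eis6 t)) := fun t w ht hw => by
    rw [heatMod_cubic 2 H1 ht hw
      (d₀ := -Eis4 t * (Eis2 t * Eis4 t - Eis6 t) / 432)
      (d₁ := (Eis2 t * Eis6 t - Eis4 t ^ 2) / 24)
      (d₂ := -(Eis2 t * Eis4 t - Eis6 t) / 6) (d₃ := 0)
      ((((hasDerivAt_Eis4 ht).fun_pow 2).const_mul (-1 / 288)).congr_deriv (by push_cast; ring))
      (((hasDerivAt_Eis6 ht hw).div_const 12).congr_deriv (by ring))
      (((hasDerivAt_Eis4 ht).const_mul (-1 / 2)).congr_deriv (by ring))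
      (hconst _ _)]
    push_cast
    ring
  have h0 : thetaD 0 τ z ≠ 0 := by rwa [← thetaJ_eq_thetaD]
  have hη := etaD_ne_zero hτ
  have hr : phim21 τ z ^ 3 = thetaW τ z := by
    rw [phim21, thetaW, (theta_taylor hτ).1, thetaJ_eq_thetaD]
    field_simp
  rw [heatMod_cubic 4 H2 hτ h0
      (d₀ := 7 / 864 * ((Eis2 τ * Eis4 τ - Eis6 τ) / 3 * Eis6 τ +
        Eis4 τ * ((Eis2 τ * Eis6 τ - Eis4 τ ^ 2) / 2)))
      (d₁ := -1 / 8 * Eis4 τ * (Eis2 τ * Eis4 τ - Eis6 τ))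
      (d₂ := (Eis2 τ * Eis6 τ - Eis4 τ ^ 2) / 2) (d₃ := (Eis2 τ * Eis4 τ - Eis6 τ) / 3)
      ((((hasDerivAt_Eis4 hτ).fun_mul (hasDerivAt_Eis6 hτ h0)).const_mul (7 / 864)).congr_deriv
        (by ring))
      ((((hasDerivAt_Eis4 hτ).fun_pow 2).const_mul (-3 / 16)).congr_deriv (by push_cast; ring))
      (hasDerivAt_Eis6 hτ h0) (hasDerivAt_Eis4 hτ),
    H1 τ z hτ h0, phi03_eq hτ h0, hr, delta_eq hτ]
  push_cast
  ring
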